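/- Let a > 1 and let n ≥ 2 be an integer. Then there exists a constant C > 0, independent of f, such that for every radial function f ∈ C_c^∞(ℝⁿ \ {0}) one has ‖S^a f‖_{L²(Bⁿ, L^∞(B))} ≤ C ‖f‖_{H^{1/4}(ℝⁿ)}. -/

import Mathlib

open MeasureTheory Real
open scoped InnerProductSpace

noncomputable section

/-- The Fourier transform `f̂(ξ) = ∫ e^{-i x·ξ} f(x) dx` on `ℝⁿ`. -/
def FT (n : ℕ) (f : EuclideanSpace ℝ (Fin n) → ℂ) (ξ : EuclideanSpace ℝ (Fin n)) : ℂ :=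
  ∫ x, Complex.exp (-(Complex.I * ((⟪x, ξ⟫_ℝ : ℝ) : ℂ))) * f x

/-- The oscillatory integral `S^a f(x,t) = (2π)^{-n} ∫ e^{i(x·ξ + t|ξ|^a)} f̂(ξ) dξ`. -/
def Sosc (n : ℕ) (a : ℝ) (f : EuclideanSpace ℝ (Fin n) → ℂ)
    (x : EuclideanSpace ℝ (Fin n)) (t : ℝ) : ℂ :=
  (((2 * π) ^ n : ℝ) : ℂ)⁻¹ *
    ∫ ξ, Complex.exp (Complex.I * ((⟪x, ξ⟫_ℝ + t * ‖ξ‖ ^ a : ℝ) : ℂ)) * FT n f ξ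

/-!
The Fourier transform of a radial function is radial, so polar coordinates turn `S^a f(x, t)` into
an integral over the radius `r` of `e^{i t r^a}` times the profile of `f̂` and the Fourier transform
of the sphere measure, evaluated at a point of norm `r|x|`. This transform solves a Bessel equation,
hence `ρ^{(n-1)/2}` times it is `α e^{iρ} + β e^{-iρ} + O((1 + ρ)⁻¹)` at norm `ρ`. After the
substitution `r = η²` the error is bounded by Cauchy–Schwarz, uniformly in `t`, since
`∫ (1 + |x|η²)⁻² dη` is `O(|x|^{-1/2})`; the main terms are integrals of `e^{i(xη² + tη^{2a})}`
against an amplitude whose `L²` norm is the homogeneous `H^{1/4}` norm of `f`. To bound their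
supremum in `t`, choose `t` as a measurable function of `x` and pass to the dual operator (`TT*`):
its kernel `∫ e^{i((x-y)η² + (t(x)-t(y))η^{2a})} dη` is `O(|x - y|^{-1/2})` by van der Corput's
estimate, whatever the function `t`, and Schur's test concludes because `|x - y|^{-1/2}` is locally
integrable.
-/

open Module (finrank)
open scoped ENNReal ComplexConjugate

/-! ### Van der Corput's estimate -/

theorem hasDerivAt_cexp_I_mul {φ : ℝ → ℝ} {d x : ℝ} (h : HasDerivAt φ d x) :
    HasDerivAt (fun y ↦ Complex.exp (Complex.I * φ y))
      (Complex.I * d * Complex.exp (Complex.I * φ x)) x :=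
  (h.ofReal_comp.const_mul Complex.I).cexp.congr_deriv (mul_comm _ _)

theorem intervalIntegral_abs_of_const_sign {g : ℝ → ℝ} {p q : ℝ} (hpq : p ≤ q)
    (hg : (∀ x ∈ Set.Icc p q, 0 ≤ g x) ∨ (∀ x ∈ Set.Icc p q, g x ≤ 0)) :
    ∫ x in p..q, |g x| = |∫ x in p..q, g x| := by
  have of_nonneg {h : ℝ → ℝ} (hh : ∀ x ∈ Set.Icc p q, 0 ≤ h x) :
      ∫ x in p..q, |h x| = |∫ x in p..q, h x| := by
    rw [abs_of_nonneg (intervalIntegral.integral_nonneg hpq hh)]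
    exact intervalIntegral.integral_congr fun x hx ↦
      abs_of_nonneg (hh x (Set.uIcc_of_le hpq ▸ hx))
  rcases hg with hg | hg
  · exact of_nonneg hg
  · simpa only [abs_neg, intervalIntegral.integral_neg]
      using of_nonneg (h := fun x ↦ -g x) fun x hx ↦ neg_nonneg.2 (hg x hx)

section VanDerCorput

variable {φ φ' φ'' : ℝ → ℝ} {p q δ : ℝ}

theorem norm_integral_cexp_le_inv_add_inv_add_integral (hpq : p ≤ q)
    (hφ : ∀ x ∈ Set.Icc p q, HasDerivAt φ (φ' x) x)
    (hφ' : ∀ x ∈ Set.Icc p q, HasDerivAt φ' (φ'' x) x)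
    (hφ'' : ContinuousOn φ'' (Set.Icc p q)) (hne : ∀ x ∈ Set.Icc p q, φ' x ≠ 0) :
    ‖∫ x in p..q, Complex.exp (Complex.I * φ x)‖ ≤
      |φ' q|⁻¹ + |φ' p|⁻¹ + ∫ x in p..q, |φ'' x / φ' x ^ 2| := by
  have hne' : ∀ x ∈ Set.Icc p q, (φ' x : ℂ) ≠ 0 := fun x hx ↦ by exact_mod_cast hne x hx
  have hcφ : ContinuousOn φ (Set.Icc p q) := HasDerivAt.continuousOn hφ
  have hcφ' : ContinuousOn φ' (Set.Icc p q) := HasDerivAt.continuousOn hφ'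
  rw [← Set.uIcc_of_le hpq] at hφ hφ' hφ'' hne hne' hcφ hcφ'
  set u : ℝ → ℂ := fun x ↦ -Complex.I * ((φ' x)⁻¹ : ℝ) with hu
  have hu_deriv : ∀ x ∈ Set.uIcc p q,
      HasDerivAt u (-Complex.I * (-φ'' x / φ' x ^ 2 : ℝ)) x := fun x hx ↦
    ((hφ' x hx).inv (hne x hx)).ofReal_comp.const_mul _
  have hcont : ContinuousOn (fun x ↦ -φ'' x / φ' x ^ 2) (Set.uIcc p q) :=
    hφ''.neg.div (hcφ'.pow 2) fun x hx ↦ pow_ne_zero 2 (hne x hx)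
  have parts := intervalIntegral.integral_mul_deriv_eq_deriv_mul hu_deriv
    (fun x hx ↦ hasDerivAt_cexp_I_mul (hφ x hx))
    (ContinuousOn.intervalIntegrable (by fun_prop))
    (ContinuousOn.intervalIntegrable (by fun_prop))
  have integrand : ∀ x ∈ Set.uIcc p q,
      u x * (Complex.I * φ' x * Complex.exp (Complex.I * φ x)) = Complex.exp (Complex.I * φ x) :=
    fun x hx ↦ by
      have := hne' x hx
      simp only [hu, Complex.ofReal_inv]
      field_simp
      linear_combination -Complex.I_sq
  have norm_boundary (x : ℝ) : ‖u x * Complex.exp (Complex.I * φ x)‖ = |φ' x|⁻¹ := by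
    simp [hu, Complex.norm_exp_I_mul_ofReal]
  rw [intervalIntegral.integral_congr integrand] at parts
  rw [parts]
  refine (norm_sub_le _ _).trans (add_le_add ((norm_sub_le _ _).trans
    (add_le_add (norm_boundary q).le (norm_boundary p).le)) ?_)
  refine (intervalIntegral.norm_integral_le_integral_norm hpq).trans_eq ?_
  refine intervalIntegral.integral_congr fun x _ ↦ ?_
  simp [Complex.norm_exp_I_mul_ofReal, abs_div]

theorem norm_integral_cexp_le_of_deriv_ge (hpq : p ≤ q) (hδ : 0 < δ)
    (hφ : ∀ x ∈ Set.Icc p q, HasDerivAt φ (φ' x) x)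
    (hφ' : ∀ x ∈ Set.Icc p q, HasDerivAt φ' (φ'' x) x)
    (hφ'' : ContinuousOn φ'' (Set.Icc p q))
    (hsign : (∀ x ∈ Set.Icc p q, 0 ≤ φ'' x) ∨ (∀ x ∈ Set.Icc p q, φ'' x ≤ 0))
    (hlower : ∀ x ∈ Set.Icc p q, δ ≤ |φ' x|) :
    ‖∫ x in p..q, Complex.exp (Complex.I * φ x)‖ ≤ 4 / δ := by
  have hne : ∀ x ∈ Set.Icc p q, φ' x ≠ 0 := fun x hx ↦
    abs_pos.1 (hδ.trans_le (hlower x hx))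
  have hinv : ∀ x ∈ Set.Icc p q, |φ' x|⁻¹ ≤ δ⁻¹ := fun x hx ↦ inv_anti₀ hδ (hlower x hx)
  have hp := hinv p (Set.left_mem_Icc.2 hpq)
  have hq := hinv q (Set.right_mem_Icc.2 hpq)
  have hcont : ContinuousOn (fun x ↦ φ'' x / φ' x ^ 2) (Set.Icc p q) :=
    hφ''.div ((HasDerivAt.continuousOn hφ').pow 2) fun x hx ↦ pow_ne_zero 2 (hne x hx)
  have variation : ∫ x in p..q, φ'' x / φ' x ^ 2 = -(φ' q)⁻¹ - -(φ' p)⁻¹ := by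
    rw [← Set.uIcc_of_le hpq] at hcont hφ' hne
    exact intervalIntegral.integral_eq_sub_of_hasDerivAt
      (fun x hx ↦ ((hφ' x hx).inv (hne x hx)).neg.congr_deriv (by ring))
      hcont.intervalIntegrable
  have hvar : ∫ x in p..q, |φ'' x / φ' x ^ 2| ≤ δ⁻¹ + δ⁻¹ := by
    rw [intervalIntegral_abs_of_const_sign hpq (hsign.imp
      (fun h x hx ↦ div_nonneg (h x hx) (sq_nonneg _))
      (fun h x hx ↦ div_nonpos_of_nonpos_of_nonneg (h x hx) (sq_nonneg _))), variation]
    refine (abs_sub _ _).trans (add_le_add ?_ ?_) <;> rwa [abs_neg, abs_inv]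
  calc ‖∫ x in p..q, Complex.exp (Complex.I * φ x)‖
      ≤ |φ' q|⁻¹ + |φ' p|⁻¹ + ∫ x in p..q, |φ'' x / φ' x ^ 2| :=
        norm_integral_cexp_le_inv_add_inv_add_integral hpq hφ hφ' hφ'' hne
    _ ≤ δ⁻¹ + δ⁻¹ + (δ⁻¹ + δ⁻¹) := by gcongr
    _ = 4 / δ := by ring

theorem norm_integral_cexp_le_of_antitoneOn (hpq : p ≤ q) (hδ : 0 < δ)
    (hφ : ∀ x ∈ Set.Icc p q, HasDerivAt φ (φ' x) x)
    (hφ' : ∀ x ∈ Set.Icc p q, HasDerivAt φ' (φ'' x) x)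
    (hφ'' : ContinuousOn φ'' (Set.Icc p q)) (hanti : AntitoneOn φ'' (Set.Icc p q))
    (hlower : ∀ x ∈ Set.Icc p q, δ ≤ |φ' x|) :
    ‖∫ x in p..q, Complex.exp (Complex.I * φ x)‖ ≤ 8 / δ := by
  have hle : 4 / δ ≤ 8 / δ := by gcongr; norm_num
  have hpm := Set.left_mem_Icc.2 hpq
  have hqm := Set.right_mem_Icc.2 hpq
  rcases le_total (φ'' p) 0 with hp | hp
  · exact (norm_integral_cexp_le_of_deriv_ge hpq hδ hφ hφ' hφ''
      (Or.inr fun x hx ↦ (hanti hpm hx hx.1).trans hp) hlower).trans hle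
  rcases le_total 0 (φ'' q) with hq | hq
  · exact (norm_integral_cexp_le_of_deriv_ge hpq hδ hφ hφ' hφ''
      (Or.inl fun x hx ↦ hq.trans (hanti hx hqm hx.2)) hlower).trans hle
  obtain ⟨r, hr, hr0⟩ := intermediate_value_Icc' hpq hφ'' ⟨hq, hp⟩
  have hleft : Set.Icc p r ⊆ Set.Icc p q := Set.Icc_subset_Icc_right hr.2
  have hright : Set.Icc r q ⊆ Set.Icc p q := Set.Icc_subset_Icc_left hr.1
  have left_le := norm_integral_cexp_le_of_deriv_ge hr.1 hδ (fun x hx ↦ hφ x (hleft hx))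
    (fun x hx ↦ hφ' x (hleft hx)) (hφ''.mono hleft)
    (Or.inl fun x hx ↦ hr0 ▸ hanti (hleft hx) hr hx.2) (fun x hx ↦ hlower x (hleft hx))
  have right_le := norm_integral_cexp_le_of_deriv_ge hr.2 hδ (fun x hx ↦ hφ x (hright hx))
    (fun x hx ↦ hφ' x (hright hx)) (hφ''.mono hright)
    (Or.inr fun x hx ↦ hr0 ▸ hanti hr (hright hx) hx.1) (fun x hx ↦ hlower x (hright hx))
  have hcφ : ContinuousOn φ (Set.Icc p q) := HasDerivAt.continuousOn hφ
  have hcont : ContinuousOn (fun x ↦ Complex.exp (Complex.I * φ x)) (Set.Icc p q) := by fun_prop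
  rw [← intervalIntegral.integral_add_adjacent_intervals
    ((hcont.mono hleft).intervalIntegrable_of_Icc hr.1)
    ((hcont.mono hright).intervalIntegrable_of_Icc hr.2)]
  calc _ ≤ 4 / δ + 4 / δ := (norm_add_le _ _).trans (add_le_add left_le right_le)
    _ = 8 / δ := by ring

end VanDerCorput

/-! ### The one-dimensional kernel estimate -/

theorem min_one_mul_one_sub_le_one_sub_rpow {b y : ℝ} (hb : 0 < b) (hy : 0 ≤ y) (hy1 : y ≤ 1) :
    min 1 b * (1 - y) ≤ 1 - y ^ b := by
  rcases le_total b 1 with hb1 | hb1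
  · have bernoulli := rpow_one_add_le_one_add_mul_self (s := y - 1) (by linarith) hb.le hb1
    rw [add_sub_cancel] at bernoulli
    rw [min_eq_right hb1]
    linarith
  · have hpow := Real.rpow_le_rpow_of_exponent_ge' hy hy1 zero_le_one hb1
    rw [Real.rpow_one] at hpow
    rw [min_eq_left hb1]
    linarith

theorem mul_sub_one_le_mul_rpow_sub_one {b y : ℝ} (hb : 0 ≤ b) (hy : 1 ≤ y) :
    b * (y - 1) ≤ y * (y ^ b - 1) := by
  have bernoulli := one_add_mul_self_le_rpow_one_add (s := y - 1) (by linarith)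
    (p := b + 1) (by linarith)
  rw [add_sub_cancel, Real.rpow_add_one (by linarith)] at bernoulli
  linarith

theorem exists_mul_min_le_mul_abs_one_sub_rpow {b : ℝ} (hb : 0 < b) :
    ∃ c > 0, ∀ y : ℝ, 0 ≤ y → c * min y |1 - y| ≤ y * |1 - y ^ b| := by
  refine ⟨min 1 b / 2, by positivity, fun y hy ↦ ?_⟩
  rcases le_total y 1 with h | h
  · have hmin : min y (1 - y) ≤ 2 * (y * (1 - y)) := by
      rcases le_total y (1 - y) with h' | h'
      · rw [min_eq_left h']; nlinarith
      · rw [min_eq_right h']; nlinarith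
    rw [abs_of_nonneg (sub_nonneg.2 h), abs_of_nonneg (sub_nonneg.2 (rpow_le_one hy h hb.le))]
    calc min 1 b / 2 * min y (1 - y) ≤ min 1 b / 2 * (2 * (y * (1 - y))) := by gcongr
      _ = y * (min 1 b * (1 - y)) := by ring
      _ ≤ y * (1 - y ^ b) := by
        gcongr; exact min_one_mul_one_sub_le_one_sub_rpow hb hy h
  · rw [abs_sub_comm 1 y, abs_sub_comm 1 (y ^ b), abs_of_nonneg (sub_nonneg.2 h),
      abs_of_nonneg (sub_nonneg.2 (one_le_rpow h hb.le))]
    have coeff_le : min 1 b / 2 ≤ b := (half_le_self (by positivity)).trans (min_le_right _ _)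
    calc min 1 b / 2 * min y (y - 1) ≤ b * (y - 1) := by
          gcongr
          exact min_le_right _ _
      _ ≤ y * (y ^ b - 1) := mul_sub_one_le_mul_rpow_sub_one hb.le h

theorem exists_mul_min_le_mul_abs_one_sub_div_rpow {b : ℝ} (hb : 0 < b) :
    ∃ c > 0, ∀ e y : ℝ, 0 < e → 0 ≤ y → c * min y |y - e| ≤ y * |1 - (y / e) ^ b| := by
  obtain ⟨c, hc, hcy⟩ := exists_mul_min_le_mul_abs_one_sub_rpow hb
  refine ⟨c, hc, fun e y he hy ↦ ?_⟩
  have hdist : |y - e| = e * |1 - y / e| := by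
    rw [← abs_of_pos he, ← abs_mul, abs_of_pos he, abs_sub_comm]
    congr 1
    field_simp
  calc c * min y |y - e| = e * (c * min (y / e) |1 - y / e|) := by
        rw [hdist, mul_left_comm, mul_min_of_nonneg _ _ he.le, mul_div_cancel₀ y he.ne']
    _ ≤ e * (y / e * |1 - (y / e) ^ b|) :=
      mul_le_mul_of_nonneg_left (hcy _ (by positivity)) he.le
    _ = y * |1 - (y / e) ^ b| := by rw [← mul_assoc, mul_div_cancel₀ y he.ne']

section Far

variable {h : ℝ → ℂ} {d e L r N : ℝ}

theorem norm_intervalIntegral_le_of_norm_le_one (hn : ∀ x, ‖h x‖ ≤ 1) {p q : ℝ} (hpq : p ≤ q) :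
    ‖∫ x in p..q, h x‖ ≤ q - p := by
  simpa [abs_of_nonneg (sub_nonneg.2 hpq)] using
    intervalIntegral.norm_integral_le_of_norm_le_const (a := p) (b := q) (C := 1) fun x _ ↦ hn x

theorem norm_integral_le_of_forall_far_from (hc : Continuous h) (hn : ∀ x, ‖h x‖ ≤ 1)
    (hd : 0 < d) (hL : 0 ≤ L)
    (hfar : ∀ p q : ℝ, p ≤ q → r ≤ p → (∀ x ∈ Set.Icc p q, d ≤ |x - e|) →
      ‖∫ x in p..q, h x‖ ≤ L) (hrN : r ≤ N) :
    ‖∫ x in r..N, h x‖ ≤ 2 * d + 2 * L := by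
  set p := max r (min (e - d) N)
  set q := max r (min (e + d) N)
  have hrp : r ≤ p := le_max_left _ _
  have hpq : p ≤ q := max_le_max le_rfl (min_le_min (by linarith) le_rfl)
  have hqN : q ≤ N := max_le hrN (min_le_right _ _)
  have hlen : q - p ≤ 2 * d := by
    rcases max_cases r (min (e - d) N) with hp | hp <;>
    rcases max_cases r (min (e + d) N) with hq | hq <;>
    rcases min_cases (e - d) N with h1 | h1 <;>
    rcases min_cases (e + d) N with h2 | h2 <;> grind
  have left_le : ‖∫ x in r..p, h x‖ ≤ L := by
    rcases hrp.eq_or_lt with heq | hlt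
    · simpa [← heq] using hL
    · have hpe : p ≤ e - d :=
        ((le_max_iff.1 le_rfl).resolve_left hlt.not_ge).trans (min_le_left _ _)
      refine hfar r p hrp le_rfl fun x hx ↦ ?_
      rw [abs_sub_comm]
      exact le_trans (by linarith [hx.2]) (le_abs_self _)
  have middle_le : ‖∫ x in p..q, h x‖ ≤ 2 * d :=
    (norm_intervalIntegral_le_of_norm_le_one hn hpq).trans hlen
  have right_le : ‖∫ x in q..N, h x‖ ≤ L := by
    rcases hqN.eq_or_lt with heq | hlt
    · simpa [heq] using hL
    · have heq : e + d ≤ q :=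
        (min_le_iff.1 (le_max_right r (min (e + d) N))).resolve_right hlt.not_ge
      exact hfar q N hqN (hrp.trans hpq) fun x hx ↦
        le_trans (by linarith [hx.1]) (le_abs_self _)
  have hi (p q : ℝ) : IntervalIntegrable h volume p q := hc.intervalIntegrable p q
  rw [← intervalIntegral.integral_add_adjacent_intervals (hi r p) (hi p N),
    ← intervalIntegral.integral_add_adjacent_intervals (hi p q) (hi q N), ← add_assoc]
  exact (norm_add₃_le).trans (by linarith)

theorem norm_integral_le_of_forall_far (hc : Continuous h) (hn : ∀ x, ‖h x‖ ≤ 1)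
    (hd : 0 < d) (hL : 0 ≤ L)
    (hfar : ∀ p q : ℝ, p ≤ q → d ≤ p → (∀ x ∈ Set.Icc p q, d ≤ |x - e|) →
      ‖∫ x in p..q, h x‖ ≤ L) (hN : 0 ≤ N) :
    ‖∫ x in 0..N, h x‖ ≤ 3 * d + 2 * L := by
  rcases le_total N d with hNd | hdN
  · have := norm_intervalIntegral_le_of_norm_le_one hn hN
    linarith
  · have near := norm_intervalIntegral_le_of_norm_le_one hn hd.le
    have far := norm_integral_le_of_forall_far_from hc hn hd hL hfar hdN
    rw [← intervalIntegral.integral_add_adjacent_intervals (hc.intervalIntegrable 0 d)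
      (hc.intervalIntegrable d N)]
    exact (norm_add_le _ _).trans (by linarith)

end Far

/-- The oscillatory factor `e^{i(xη² + tη^b)}`, obtained from `e^{i(xξ + tξ^a)}` by substituting
`ξ = η²` and writing `b = 2a`. -/
def oscFactor (b x t η : ℝ) : ℂ := Complex.exp (Complex.I * ((x * η ^ 2 + t * η ^ b : ℝ) : ℂ))

section OscFactor

variable {b x t e d p q : ℝ}

theorem norm_oscFactor (b x t η : ℝ) : ‖oscFactor b x t η‖ = 1 :=
  Complex.norm_exp_I_mul_ofReal _

theorem continuous_oscFactor (hb : 0 ≤ b) :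
    Continuous fun z : ℝ × ℝ × ℝ ↦ oscFactor b z.1 z.2.1 z.2.2 := by
  have : Continuous fun z : ℝ × ℝ × ℝ ↦ z.2.2 ^ b :=
    (Real.continuous_rpow_const hb).comp (by fun_prop)
  unfold oscFactor
  fun_prop

theorem conj_oscFactor (b x t η : ℝ) :
    (starRingEnd ℂ) (oscFactor b x t η) = oscFactor b (-x) (-t) η := by
  rw [oscFactor, oscFactor, ← Complex.exp_conj, map_mul, Complex.conj_I, Complex.conj_ofReal]
  congr 1
  push_cast
  ring

theorem oscFactor_mul (b x y t s η : ℝ) :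
    oscFactor b x t η * oscFactor b y s η = oscFactor b (x + y) (t + s) η := by
  rw [oscFactor, oscFactor, oscFactor, ← Complex.exp_add]
  congr 1
  push_cast
  ring

theorem hasDerivAt_oscPhase (b x t : ℝ) {η : ℝ} (hη : η ≠ 0) :
    HasDerivAt (fun η : ℝ ↦ x * η ^ 2 + t * η ^ b) (2 * x * η + t * b * η ^ (b - 1)) η :=
  (((hasDerivAt_pow 2 η).const_mul x).add
    ((Real.hasDerivAt_rpow_const (Or.inl hη)).const_mul t)).congr_deriv (by push_cast; ring)

theorem hasDerivAt_deriv_oscPhase (b x t : ℝ) {η : ℝ} (hη : η ≠ 0) :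
    HasDerivAt (fun η : ℝ ↦ 2 * x * η + t * b * η ^ (b - 1))
      (2 * x + t * b * (b - 1) * η ^ (b - 2)) η := by
  refine (((hasDerivAt_id η).const_mul (2 * x)).add
    ((Real.hasDerivAt_rpow_const (Or.inl hη)).const_mul (t * b))).congr_deriv ?_
  rw [show b - 1 - 1 = b - 2 by ring]
  ring

theorem continuous_deriv_deriv_oscPhase (hb : 2 ≤ b) (x t : ℝ) :
    Continuous fun η : ℝ ↦ 2 * x + t * b * (b - 1) * η ^ (b - 2) := by
  have : Continuous fun η : ℝ ↦ η ^ (b - 2) := Real.continuous_rpow_const (by linarith)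
  fun_prop

theorem norm_integral_oscFactor_le_of_nonneg (hb : 2 < b) (hx : 0 < x) (ht : 0 ≤ t) (hd : 0 < d)
    (hpq : p ≤ q) (hdp : d ≤ p) :
    ‖∫ η in p..q, oscFactor b x t η‖ ≤ 4 / (2 * (x * d)) := by
  have hpos : ∀ y ∈ Set.Icc p q, 0 < y := fun y hy ↦ hd.trans_le (hdp.trans hy.1)
  have hb1 : 0 < b - 1 := by linarith
  refine norm_integral_cexp_le_of_deriv_ge hpq (by positivity)
    (fun y hy ↦ hasDerivAt_oscPhase b x t (hpos y hy).ne')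
    (fun y hy ↦ hasDerivAt_deriv_oscPhase b x t (hpos y hy).ne')
    (continuous_deriv_deriv_oscPhase hb.le x t).continuousOn
    (Or.inl fun y hy ↦ ?_) (fun y hy ↦ ?_)
  · have := hpos y hy
    positivity
  · have hdy : d ≤ y := hdp.trans hy.1
    have hpow : 0 ≤ t * b * y ^ (b - 1) := by have := hpos y hy; positivity
    calc 2 * (x * d) ≤ 2 * (x * y) := by gcongr
      _ ≤ 2 * x * y + t * b * y ^ (b - 1) := by linarith
      _ ≤ _ := le_abs_self _

theorem deriv_oscPhase_eq_of_stationary (he : 0 < e) (hstat : t * b * e ^ (b - 2) = -(2 * x))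
    {y : ℝ} (hy : 0 < y) :
    2 * x * y + t * b * y ^ (b - 1) = 2 * x * (y * (1 - (y / e) ^ (b - 2))) := by
  have hpow : y ^ (b - 1) = y * (e ^ (b - 2) * (y / e) ^ (b - 2)) := by
    rw [← Real.mul_rpow he.le (by positivity), mul_div_cancel₀ y he.ne',
      show b - 1 = (b - 2) + 1 by ring, Real.rpow_add_one hy.ne', mul_comm]
  rw [hpow]
  linear_combination y * (y / e) ^ (b - 2) * hstat

theorem exists_stationary_oscPhase (hb : 2 < b) (hx : 0 < x) (ht : t < 0) :
    ∃ e > 0, t * b * e ^ (b - 2) = -(2 * x) := by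
  have hr : 0 < 2 * x / (-t * b) := by
    have := neg_pos.2 ht
    positivity
  refine ⟨(2 * x / (-t * b)) ^ (b - 2)⁻¹, Real.rpow_pos_of_pos hr _, ?_⟩
  rw [Real.rpow_inv_rpow hr.le (by linarith)]
  field_simp [ht.ne]

theorem norm_integral_oscFactor_le_of_stationary {c : ℝ} (hb : 2 < b) (hx : 0 < x) (ht : t < 0)
    (hc : 0 < c)
    (hlower : ∀ e y : ℝ, 0 < e → 0 ≤ y → c * min y |y - e| ≤ y * |1 - (y / e) ^ (b - 2)|)
    (he : 0 < e) (hstat : t * b * e ^ (b - 2) = -(2 * x)) (hd : 0 < d) (hpq : p ≤ q) (hdp : d ≤ p)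
    (hfar : ∀ y ∈ Set.Icc p q, d ≤ |y - e|) :
    ‖∫ η in p..q, oscFactor b x t η‖ ≤ 8 / (2 * x * (c * d)) := by
  have hpos : ∀ y ∈ Set.Icc p q, 0 < y := fun y hy ↦ hd.trans_le (hdp.trans hy.1)
  refine norm_integral_cexp_le_of_antitoneOn hpq (by positivity)
    (fun y hy ↦ hasDerivAt_oscPhase b x t (hpos y hy).ne')
    (fun y hy ↦ hasDerivAt_deriv_oscPhase b x t (hpos y hy).ne')
    (continuous_deriv_deriv_oscPhase hb.le x t).continuousOn
    (fun y hy z _ hyz ↦ ?_) (fun y hy ↦ ?_)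
  · have hcoeff : t * b * (b - 1) ≤ 0 := by
      have : 0 ≤ b * (b - 1) := by nlinarith
      nlinarith
    exact add_le_add_right (mul_le_mul_of_nonpos_left
      (Real.rpow_le_rpow (hpos y hy).le hyz (by linarith)) hcoeff) _
  · have hy0 := hpos y hy
    rw [deriv_oscPhase_eq_of_stationary he hstat hy0, abs_mul, abs_mul y, abs_of_pos hy0,
      abs_of_pos (by positivity : 0 < 2 * x)]
    refine mul_le_mul_of_nonneg_left (le_trans ?_ (hlower e y he hy0.le)) (by positivity)
    gcongr
    exact le_min (hdp.trans hy.1) (hfar y hy)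

theorem exists_norm_integral_oscFactor_le_of_far (hb : 2 < b) :
    ∃ K > 0, ∀ x t : ℝ, 0 < x → ∃ e : ℝ, ∀ d p q : ℝ, 0 < d → p ≤ q → d ≤ p →
      (∀ y ∈ Set.Icc p q, d ≤ |y - e|) → ‖∫ η in p..q, oscFactor b x t η‖ ≤ K / (x * d) := by
  obtain ⟨c, hc, hlower⟩ :=
    exists_mul_min_le_mul_abs_one_sub_div_rpow (b := b - 2) (by linarith)
  refine ⟨max 2 (4 / c), by positivity, fun x t hx ↦ ?_⟩
  rcases le_or_gt 0 t with ht | ht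
  · refine ⟨0, fun d p q hd hpq hdp _ ↦ ?_⟩
    calc _ ≤ 4 / (2 * (x * d)) := norm_integral_oscFactor_le_of_nonneg hb hx ht hd hpq hdp
      _ = 2 / (x * d) := by field_simp; norm_num
      _ ≤ max 2 (4 / c) / (x * d) := by gcongr; exact le_max_left _ _
  · obtain ⟨e, he, hstat⟩ := exists_stationary_oscPhase hb hx ht
    refine ⟨e, fun d p q hd hpq hdp hfar ↦ ?_⟩
    calc _ ≤ 8 / (2 * x * (c * d)) :=
          norm_integral_oscFactor_le_of_stationary hb hx ht hc hlower he hstat hd hpq hdp hfar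
      _ = 4 / c / (x * d) := by field_simp; norm_num
      _ ≤ max 2 (4 / c) / (x * d) := by gcongr; exact le_max_right _ _

theorem norm_integral_oscFactor_neg_neg (b x t N : ℝ) :
    ‖∫ η in 0..N, oscFactor b (-x) (-t) η‖ = ‖∫ η in 0..N, oscFactor b x t η‖ := by
  simp_rw [← conj_oscFactor, intervalIntegral.intervalIntegral_eq_integral_uIoc, integral_conj,
    norm_smul, RCLike.norm_conj]

theorem exists_norm_integral_oscFactor_le (hb : 2 < b) :
    ∃ C > 0, ∀ x t N : ℝ, x ≠ 0 → 0 ≤ N →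
      ‖∫ η in 0..N, oscFactor b x t η‖ ≤ C * |x| ^ (-(1 / 2) : ℝ) := by
  obtain ⟨K, hK, H⟩ := exists_norm_integral_oscFactor_le_of_far hb
  have of_pos (x t N : ℝ) (hx : 0 < x) (hN : 0 ≤ N) :
      ‖∫ η in 0..N, oscFactor b x t η‖ ≤ (3 + 2 * K) * |x| ^ (-(1 / 2) : ℝ) := by
    obtain ⟨e, he⟩ := H x t hx
    rw [abs_of_pos hx]
    -- The scale `d = x^{-1/2}` balances the trivial bound near `0` and `e` against `K / (xd)`.
    set d := x ^ (-(1 / 2) : ℝ) with hd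
    have hd0 : 0 < d := Real.rpow_pos_of_pos hx _
    have hcont : Continuous (oscFactor b x t) :=
      (continuous_oscFactor (by linarith)).comp (Continuous.prodMk_right x |>.comp
        (Continuous.prodMk_right t))
    have hscale : K / (x * d) = K * d := by
      have hdd : x * d * d = 1 := by
        rw [mul_assoc, hd, ← Real.rpow_add hx, ← neg_add, add_halves, Real.rpow_neg_one,
          mul_inv_cancel₀ hx.ne']
      field_simp
      linear_combination -hdd
    refine (norm_integral_le_of_forall_far hcont (fun η ↦ (norm_oscFactor b x t η).le) hd0
      (by positivity) (fun p q hpq hdp hf ↦ he d p q hd0 hpq hdp hf) hN).trans_eq ?_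
    rw [hscale]
    ring
  refine ⟨3 + 2 * K, by positivity, fun x t N hx hN ↦ ?_⟩
  rcases lt_or_gt_of_ne hx with hx | hx
  · rw [← norm_integral_oscFactor_neg_neg, ← abs_neg]
    exact of_pos (-x) (-t) N (neg_pos.2 hx) hN
  · exact of_pos x t N hx hN

end OscFactor

/-! ### The `TT*` method -/

section TTstar

variable {X Y : Type*} [MeasurableSpace X] [MeasurableSpace Y] {ν : Measure X} {μ : Measure Y}

theorem sq_lintegral_mul_le {f g : X → ℝ≥0∞} (hf : AEMeasurable f ν) (hg : AEMeasurable g ν) :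
    (∫⁻ x, f x * g x ∂ν) ^ 2 ≤ (∫⁻ x, f x ^ 2 ∂ν) * ∫⁻ x, g x ^ 2 ∂ν := by
  have holder := ENNReal.lintegral_mul_le_Lp_mul_Lq ν Real.HolderConjugate.two_two hf hg
  calc (∫⁻ x, f x * g x ∂ν) ^ 2
      ≤ ((∫⁻ x, f x ^ (2 : ℝ) ∂ν) ^ (1 / 2 : ℝ) * (∫⁻ x, g x ^ (2 : ℝ) ∂ν) ^ (1 / 2 : ℝ)) ^ 2 :=
        pow_le_pow_left' holder 2
    _ = _ := by
      simp only [mul_pow, ← ENNReal.rpow_natCast, ← ENNReal.rpow_mul, Nat.cast_ofNat, one_div,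
        inv_mul_cancel_of_invertible, ENNReal.rpow_one]

theorem lintegral_mul_mul_le_of_symm [SFinite ν] {k : X → X → ℝ≥0∞} {A : ℝ≥0∞}
    (hk : Measurable fun z : X × X ↦ k z.1 z.2) (hsymm : ∀ x y, k x y = k y x)
    (hkA : ∀ᵐ x ∂ν, ∫⁻ y, k x y ∂ν ≤ A) {u : X → ℝ≥0∞} (hu : Measurable u) :
    ∫⁻ x, ∫⁻ y, u x * u y * k x y ∂ν ∂ν ≤ A * ∫⁻ x, u x ^ 2 ∂ν := by
  have young (v w : ℝ≥0∞) : v * w ≤ 2⁻¹ * v ^ 2 + 2⁻¹ * w ^ 2 := by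
    have := ENNReal.young_inequality v w Real.HolderConjugate.two_two
    simpa [div_eq_mul_inv, mul_comm] using this
  have hku : Measurable fun z : X × X ↦ 2⁻¹ * u z.1 ^ 2 * k z.1 z.2 := by fun_prop
  have weighted : ∫⁻ x, ∫⁻ y, 2⁻¹ * u x ^ 2 * k x y ∂ν ∂ν ≤ 2⁻¹ * (A * ∫⁻ x, u x ^ 2 ∂ν) := by
    calc ∫⁻ x, ∫⁻ y, 2⁻¹ * u x ^ 2 * k x y ∂ν ∂ν
        = ∫⁻ x, 2⁻¹ * u x ^ 2 * ∫⁻ y, k x y ∂ν ∂ν :=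
          lintegral_congr fun x ↦ lintegral_const_mul _ (by fun_prop)
      _ ≤ ∫⁻ x, 2⁻¹ * A * u x ^ 2 ∂ν := lintegral_mono_ae <| hkA.mono fun x hx ↦
          (mul_le_mul_right hx _).trans_eq (mul_right_comm _ _ _)
      _ = _ := by rw [lintegral_const_mul _ (by fun_prop), mul_assoc]
  calc ∫⁻ x, ∫⁻ y, u x * u y * k x y ∂ν ∂ν
      ≤ ∫⁻ x, ∫⁻ y, (2⁻¹ * u x ^ 2 * k x y + 2⁻¹ * u y ^ 2 * k x y) ∂ν ∂ν :=
        lintegral_mono fun x ↦ lintegral_mono fun y ↦ by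
          dsimp only
          rw [← add_mul]
          exact mul_le_mul_left (young _ _) _
    _ = ∫⁻ x, ∫⁻ y, 2⁻¹ * u x ^ 2 * k x y ∂ν ∂ν + ∫⁻ x, ∫⁻ y, 2⁻¹ * u y ^ 2 * k x y ∂ν ∂ν := by
        rw [← lintegral_add_left hku.lintegral_prod_right']
        exact lintegral_congr fun x ↦ lintegral_add_left (by fun_prop) _
    _ = ∫⁻ x, ∫⁻ y, 2⁻¹ * u x ^ 2 * k x y ∂ν ∂ν + ∫⁻ x, ∫⁻ y, 2⁻¹ * u x ^ 2 * k x y ∂ν ∂ν := by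
        congr 1
        rw [lintegral_lintegral_swap (by fun_prop)]
        simp_rw [hsymm]
    _ ≤ 2⁻¹ * (A * ∫⁻ x, u x ^ 2 ∂ν) + 2⁻¹ * (A * ∫⁻ x, u x ^ 2 ∂ν) :=
        add_le_add weighted weighted
    _ = A * ∫⁻ x, u x ^ 2 ∂ν := by rw [← add_mul, ENNReal.inv_two_add_inv_two, one_mul]

theorem lintegral_enorm_sq_eq_enorm_integral {V : Y → ℂ} (hV : MemLp V 2 μ) :
    ∫⁻ y, ‖V y‖ₑ ^ 2 ∂μ = ‖∫ y, conj (V y) * V y ∂μ‖ₑ := by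
  have hsq := (memLp_two_iff_integrable_sq_norm hV.1).1 hV
  simp_rw [Complex.conj_mul', ← Complex.ofReal_pow, integral_complex_ofReal]
  rw [← ofReal_norm, Complex.norm_real, Real.norm_of_nonneg (by positivity),
    ofReal_integral_eq_lintegral_ofReal hsq (.of_forall fun y ↦ by positivity)]
  simp_rw [ENNReal.ofReal_pow (norm_nonneg _), ofReal_norm]

variable {m : X × Y → ℂ} {u : X → ℂ} {G : Y → ℂ}

theorem integral_mul_integral_kernel_eq [SFinite ν] [SFinite μ] (hm : Measurable m)
    (hm1 : ∀ z, ‖m z‖ ≤ 1) (hu : Integrable u ν) (hG : Integrable G μ) :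
    ∫ x, u x * ∫ y, m (x, y) * G y ∂μ ∂ν = ∫ y, (∫ x, u x * m (x, y) ∂ν) * G y ∂μ := by
  have hint : Integrable (fun z : X × Y ↦ u z.1 * m z * G z.2) (ν.prod μ) :=
    ((hu.mul_prod hG).bdd_mul (c := 1) hm.aestronglyMeasurable (.of_forall hm1)).congr
      (.of_forall fun z ↦ by ring)
  have := integral_integral_swap (f := fun x y ↦ u x * m (x, y) * G y) hint
  simp_rw [integral_mul_const] at this
  rw [← this]
  simp_rw [mul_assoc, integral_const_mul]

theorem integral_conj_mul_self_kernel_eq [SFinite ν] [IsFiniteMeasure μ] (hm : Measurable m)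
    (hm1 : ∀ z, ‖m z‖ ≤ 1) (hu : Integrable u ν) :
    ∫ y, conj (∫ x, u x * m (x, y) ∂ν) * (∫ x, u x * m (x, y) ∂ν) ∂μ =
      ∫ z : X × X, conj (u z.1) * u z.2 * ∫ y, conj (m (z.1, y)) * m (z.2, y) ∂μ ∂ν.prod ν := by
  have hmc : Measurable fun w : Y × X × X ↦ conj (m (w.2.1, w.1)) * m (w.2.2, w.1) :=
    (Complex.continuous_conj.measurable.comp (hm.comp (by fun_prop))).mul
      (hm.comp (by fun_prop))
  have hint : Integrable (fun w : Y × X × X ↦ conj (u w.2.1) * u w.2.2 *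
      (conj (m (w.2.1, w.1)) * m (w.2.2, w.1))) (μ.prod (ν.prod ν)) := by
    have huu : Integrable (fun z : X × X ↦ conj (u z.1) * u z.2) (ν.prod ν) :=
      (Complex.conjLIE.toContinuousLinearEquiv.integrable_comp_iff.2 hu).mul_prod hu
    refine (huu.comp_snd μ).mul_bdd (c := 1) hmc.aestronglyMeasurable (.of_forall fun w ↦ ?_)
    rw [norm_mul, RCLike.norm_conj]
    exact mul_le_one₀ (hm1 _) (norm_nonneg _) (hm1 _)
  calc _ = ∫ y, ∫ z : X × X,
        conj (u z.1) * u z.2 * (conj (m (z.1, y)) * m (z.2, y)) ∂ν.prod ν ∂μ := by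
        refine integral_congr_ae (.of_forall fun y ↦ ?_)
        dsimp only
        rw [← integral_conj, ← integral_prod_mul]
        simp only [map_mul, mul_mul_mul_comm]
    _ = _ := by
        rw [integral_integral_swap (f := fun (y : Y) (z : X × X) ↦
          conj (u z.1) * u z.2 * (conj (m (z.1, y)) * m (z.2, y))) hint]
        simp only [integral_const_mul]

variable [IsFiniteMeasure ν] [IsFiniteMeasure μ] {k : X → X → ℝ≥0∞} {A : ℝ≥0∞}

theorem lintegral_enorm_adjoint_kernel_sq_le (hm : Measurable m) (hm1 : ∀ z, ‖m z‖ ≤ 1)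
    (hk : Measurable fun z : X × X ↦ k z.1 z.2) (hsymm : ∀ x y, k x y = k y x)
    (hkA : ∀ᵐ x ∂ν, ∫⁻ y, k x y ∂ν ≤ A)
    (hK : ∀ x x', ‖∫ y, conj (m (x, y)) * m (x', y) ∂μ‖ₑ ≤ k x x')
    (hum : Measurable u) (hu : Integrable u ν) :
    ∫⁻ y, ‖∫ x, u x * m (x, y) ∂ν‖ₑ ^ 2 ∂μ ≤ A * ∫⁻ x, ‖u x‖ₑ ^ 2 ∂ν := by
  have hV : MemLp (fun y ↦ ∫ x, u x * m (x, y) ∂ν) 2 μ := by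
    refine MemLp.of_bound ?_ (∫ x, ‖u x‖ ∂ν) (.of_forall fun y ↦ ?_)
    · exact ((hum.comp measurable_fst).mul hm).stronglyMeasurable.integral_prod_left'
        |>.aestronglyMeasurable
    · refine norm_integral_le_of_norm_le hu.norm (.of_forall fun x ↦ ?_)
      rw [norm_mul]
      exact mul_le_of_le_one_right (norm_nonneg _) (hm1 _)
  calc ∫⁻ y, ‖∫ x, u x * m (x, y) ∂ν‖ₑ ^ 2 ∂μ
      = ‖∫ z : X × X, conj (u z.1) * u z.2 *
          ∫ y, conj (m (z.1, y)) * m (z.2, y) ∂μ ∂ν.prod ν‖ₑ := by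
        rw [lintegral_enorm_sq_eq_enorm_integral hV, integral_conj_mul_self_kernel_eq hm hm1 hu]
    _ ≤ ∫⁻ z : X × X, ‖u z.1‖ₑ * ‖u z.2‖ₑ * k z.1 z.2 ∂ν.prod ν := by
        refine (enorm_integral_le_lintegral_enorm _).trans (lintegral_mono fun z ↦ ?_)
        rw [enorm_mul, enorm_mul, RCLike.enorm_conj]
        exact mul_le_mul_right (hK _ _) _
    _ = ∫⁻ x, ∫⁻ x', ‖u x‖ₑ * ‖u x'‖ₑ * k x x' ∂ν ∂ν :=
        lintegral_prod _ (by fun_prop)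
    _ ≤ A * ∫⁻ x, ‖u x‖ₑ ^ 2 ∂ν := lintegral_mul_mul_le_of_symm hk hsymm hkA hum.enorm

theorem lintegral_enorm_kernel_sq_le (hm : Measurable m) (hm1 : ∀ z, ‖m z‖ ≤ 1)
    (hk : Measurable fun z : X × X ↦ k z.1 z.2) (hsymm : ∀ x y, k x y = k y x)
    (hkA : ∀ᵐ x ∂ν, ∫⁻ y, k x y ∂ν ≤ A)
    (hK : ∀ x x', ‖∫ y, conj (m (x, y)) * m (x', y) ∂μ‖ₑ ≤ k x x')
    (hGm : Measurable G) (hG : Integrable G μ) :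
    ∫⁻ x, ‖∫ y, m (x, y) * G y ∂μ‖ₑ ^ 2 ∂ν ≤ A * ∫⁻ y, ‖G y‖ₑ ^ 2 ∂μ := by
  set U : X → ℂ := fun x ↦ ∫ y, m (x, y) * G y ∂μ
  set V : Y → ℂ := fun y ↦ ∫ x, conj (U x) * m (x, y) ∂ν
  have hUm : Measurable U :=
    (hm.mul (hGm.comp measurable_snd)).stronglyMeasurable.integral_prod_right'.measurable
  have hU : MemLp U 2 ν := by
    refine MemLp.of_bound hUm.aestronglyMeasurable (∫ y, ‖G y‖ ∂μ) (.of_forall fun x ↦ ?_)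
    refine norm_integral_le_of_norm_le hG.norm (.of_forall fun y ↦ ?_)
    rw [norm_mul]
    exact mul_le_of_le_one_left (norm_nonneg _) (hm1 _)
  have hUc : Measurable fun x ↦ conj (U x) := Complex.continuous_conj.measurable.comp hUm
  have hUi : Integrable (fun x ↦ conj (U x)) ν :=
    Complex.conjLIE.toContinuousLinearEquiv.integrable_comp_iff.2
      (hU.integrable (by norm_num))
  have hVm : Measurable V :=
    ((hUc.comp measurable_fst).mul hm).stronglyMeasurable.integral_prod_left'.measurable
  have adjoint_le : ∫⁻ y, ‖V y‖ₑ ^ 2 ∂μ ≤ A * ∫⁻ x, ‖U x‖ₑ ^ 2 ∂ν := by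
    simpa only [RCLike.enorm_conj] using
      lintegral_enorm_adjoint_kernel_sq_le hm hm1 hk hsymm hkA hK hUc hUi
  have duality : ∫⁻ x, ‖U x‖ₑ ^ 2 ∂ν ≤ ∫⁻ y, ‖V y‖ₑ * ‖G y‖ₑ ∂μ := by
    rw [lintegral_enorm_sq_eq_enorm_integral hU, integral_mul_integral_kernel_eq hm hm1 hUi hG]
    simpa only [enorm_mul] using enorm_integral_le_lintegral_enorm (fun y ↦ V y * G y)
  have hfin : ∫⁻ x, ‖U x‖ₑ ^ 2 ∂ν ≠ ⊤ := by
    rw [lintegral_enorm_sq_eq_enorm_integral hU]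
    exact enorm_ne_top
  rcases eq_or_ne (∫⁻ x, ‖U x‖ₑ ^ 2 ∂ν) 0 with h0 | h0
  · exact h0 ▸ zero_le
  refine (ENNReal.mul_le_mul_iff_right h0 hfin).1 ?_
  calc (∫⁻ x, ‖U x‖ₑ ^ 2 ∂ν) * ∫⁻ x, ‖U x‖ₑ ^ 2 ∂ν
      ≤ (∫⁻ y, ‖V y‖ₑ * ‖G y‖ₑ ∂μ) ^ 2 := by
        rw [← sq]
        exact pow_le_pow_left' duality 2
    _ ≤ (∫⁻ y, ‖V y‖ₑ ^ 2 ∂μ) * ∫⁻ y, ‖G y‖ₑ ^ 2 ∂μ :=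
        sq_lintegral_mul_le hVm.enorm.aemeasurable hGm.enorm.aemeasurable
    _ ≤ (A * ∫⁻ x, ‖U x‖ₑ ^ 2 ∂ν) * ∫⁻ y, ‖G y‖ₑ ^ 2 ∂μ := mul_le_mul_left adjoint_le _
    _ = (∫⁻ x, ‖U x‖ₑ ^ 2 ∂ν) * (A * ∫⁻ y, ‖G y‖ₑ ^ 2 ∂μ) := by ring

end TTstar

/-! ### The one-dimensional maximal estimate -/

section Linearization

variable {X T : Type*} [MeasurableSpace X] [MeasurableSpace T] {F : X → T → ℝ≥0∞}

theorem exists_measurable_forall_le (hF : Measurable fun z : X × T ↦ F z.1 z.2) (t : ℕ → T)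
    (m : ℕ) : ∃ τ : X → T, Measurable τ ∧ ∀ x, ∀ k ≤ m, F x (t k) ≤ F x (τ x) := by
  induction m with
  | zero =>
    refine ⟨fun _ ↦ t 0, measurable_const, fun x k hk ↦ ?_⟩
    rw [Nat.le_zero.1 hk]
  | succ m ih =>
    classical
    obtain ⟨τ, hτ, hle⟩ := ih
    have hS : MeasurableSet {x | F x (τ x) ≤ F x (t (m + 1))} :=
      measurableSet_le (hF.comp (measurable_id.prodMk hτ))
        (hF.comp (measurable_id.prodMk measurable_const))
    refine ⟨fun x ↦ if F x (τ x) ≤ F x (t (m + 1)) then t (m + 1) else τ x,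
      Measurable.ite hS measurable_const hτ, fun x k hk ↦ ?_⟩
    dsimp only
    rcases Nat.le_succ_iff.1 hk with hkm | rfl <;> split_ifs with h
    · exact (hle x k hkm).trans h
    · exact hle x k hkm
    · rfl
    · exact (not_le.1 h).le

theorem lintegral_iSup_le_of_forall_measurable {ν : Measure X} {A : ℝ≥0∞}
    (hF : Measurable fun z : X × T ↦ F z.1 z.2)
    (hA : ∀ τ : X → T, Measurable τ → ∫⁻ x, F x (τ x) ∂ν ≤ A) (t : ℕ → T) :
    ∫⁻ x, ⨆ k, F x (t k) ∂ν ≤ A := by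
  choose τ hτ hle using exists_measurable_forall_le hF t
  calc ∫⁻ x, ⨆ k, F x (t k) ∂ν
      ≤ ∫⁻ x, Filter.liminf (fun m ↦ F x (τ m x)) Filter.atTop ∂ν :=
        lintegral_mono fun x ↦ iSup_le fun k ↦ Filter.le_liminf_of_le (by isBoundedDefault) <|
          (Filter.eventually_ge_atTop k).mono fun m hm ↦ hle m x k hm
    _ ≤ Filter.liminf (fun m ↦ ∫⁻ x, F x (τ m x) ∂ν) Filter.atTop :=
        lintegral_liminf_le fun m ↦ hF.comp (measurable_id.prodMk (hτ m))
    _ ≤ A := Filter.liminf_le_of_frequently_le' (.of_forall fun m ↦ hA (τ m) (hτ m))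

end Linearization

theorem lintegral_enorm_rpow_lt_top {r : ℝ} (hr : -1 < r) (R : ℝ) :
    ∫⁻ u : ℝ in Metric.ball 0 R, ‖u‖ₑ ^ r < ⊤ := by
  rcases le_or_gt R 0 with hR | hR
  · simp [Metric.ball_eq_empty.2 hR]
  have hint : IntegrableOn (fun u : ℝ ↦ ‖u‖ ^ r) (Metric.ball 0 R) := by
    refine (integrableOn_fun_norm_addHaar volume (f := fun s : ℝ ↦ s ^ r)).2 ?_
    simpa using (intervalIntegral.integrableOn_Ioo_rpow_iff hR).2 hr
  refine lt_of_eq_of_lt (lintegral_congr_ae ?_) hint.2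
  filter_upwards [ae_restrict_of_ae (Measure.ae_ne volume (0 : ℝ))] with u hu
  rw [← ofReal_norm u, ENNReal.ofReal_rpow_of_pos (norm_pos_iff.2 hu),
    Real.enorm_of_nonneg (by positivity)]

theorem lintegral_enorm_sub_rpow_le {r R x : ℝ} (hx : x ∈ Metric.ball 0 R) :
    ∫⁻ y in Metric.ball 0 R, ‖x - y‖ₑ ^ r ≤ ∫⁻ u : ℝ in Metric.ball 0 (2 * R), ‖u‖ₑ ^ r := by
  simp_rw [← lintegral_indicator Metric.isOpen_ball.measurableSet]
  rw [← lintegral_sub_left_eq_self _ x]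
  refine lintegral_mono fun y ↦ ?_
  by_cases hy : x - y ∈ Metric.ball (0 : ℝ) R
  · have hy2 : y ∈ Metric.ball (0 : ℝ) (2 * R) := by
      rw [mem_ball_zero_iff] at *
      linarith [norm_le_norm_add_norm_sub' y x, norm_sub_rev y x]
    rw [Set.indicator_of_mem hy, Set.indicator_of_mem hy2, sub_sub_cancel]
  · rw [Set.indicator_of_notMem hy]
    exact zero_le

/-- The oscillatory integral `∫₀^∞ exp (i (x η² + t η ^ b)) G η dη`. -/
def oscInt (b : ℝ) (G : ℝ → ℂ) (x t : ℝ) : ℂ := ∫ η in Set.Ioi 0, oscFactor b x t η * G η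

/-- The square of the maximal function of `oscInt`, the supremum being over all times. -/
def oscSup (b : ℝ) (G : ℝ → ℂ) (x : ℝ) : ℝ≥0∞ := ⨆ t : ℝ, ‖oscInt b G x t‖ₑ ^ 2

section OscInt

variable {b : ℝ} {G : ℝ → ℂ}

theorem measurable_oscFactor_comp {Ω : Type*} [MeasurableSpace Ω] {x t η : Ω → ℝ} (hb : 0 ≤ b)
    (hx : Measurable x) (ht : Measurable t) (hη : Measurable η) :
    Measurable fun ω ↦ oscFactor b (x ω) (t ω) (η ω) :=
  (continuous_oscFactor hb).measurable.comp (hx.prodMk (ht.prodMk hη))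

theorem measurable_oscInt (hb : 0 ≤ b) (hG : Measurable G) :
    Measurable fun z : ℝ × ℝ ↦ oscInt b G z.1 z.2 := by
  have hm : Measurable fun w : (ℝ × ℝ) × ℝ ↦ oscFactor b w.1.1 w.1.2 w.2 * G w.2 :=
    (measurable_oscFactor_comp hb (by fun_prop) (by fun_prop) measurable_snd).mul
      (hG.comp measurable_snd)
  exact hm.stronglyMeasurable.integral_prod_right'.measurable

theorem continuous_oscInt (hb : 0 ≤ b) (hG : IntegrableOn G (Set.Ioi 0)) (x : ℝ) :
    Continuous (oscInt b G x) := by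
  have hcont := continuous_oscFactor hb
  refine continuous_of_dominated (bound := fun η ↦ ‖G η‖) (fun t ↦ ?_) (fun t ↦ ?_) hG.norm ?_
  · exact (hcont.comp (by fun_prop : Continuous fun η : ℝ ↦ (x, t, η))).aestronglyMeasurable.mul
      hG.aestronglyMeasurable
  · exact .of_forall fun η ↦ by rw [norm_mul, norm_oscFactor, one_mul]
  · exact .of_forall fun η ↦
      (hcont.comp (by fun_prop : Continuous fun t : ℝ ↦ (x, t, η))).mul continuous_const

theorem oscSup_eq_iSup_denseSeq (hb : 0 ≤ b) (hG : IntegrableOn G (Set.Ioi 0)) (x : ℝ) :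
    oscSup b G x = ⨆ k, ‖oscInt b G x (TopologicalSpace.denseSeq ℝ k)‖ₑ ^ 2 := by
  have hcont : Continuous fun t ↦ ‖oscInt b G x t‖ₑ ^ 2 :=
    (ENNReal.continuous_pow 2).comp (continuous_oscInt hb hG x).enorm
  rw [oscSup, ← (TopologicalSpace.denseRange_denseSeq ℝ).ciSup' hcont,
    iSup_range' (‖oscInt b G x ·‖ₑ ^ 2)]

theorem measurable_oscSup (hb : 0 ≤ b) (hGm : Measurable G) (hG : IntegrableOn G (Set.Ioi 0)) :
    Measurable (oscSup b G) := by
  rw [funext (oscSup_eq_iSup_denseSeq hb hG)]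
  exact .iSup fun k ↦ ((measurable_oscInt hb hGm).comp
    (measurable_id.prodMk measurable_const)).enorm.pow_const 2

theorem exists_enorm_integral_oscFactor_le (hb : 2 < b) :
    ∃ C : ℝ≥0∞, C ≠ ⊤ ∧ ∀ x t N : ℝ, 0 ≤ N →
      ‖∫ η in Set.Ioc 0 N, oscFactor b x t η‖ₑ ≤ C * ‖x‖ₑ ^ (-(1 / 2) : ℝ) := by
  obtain ⟨C, hC, hle⟩ := exists_norm_integral_oscFactor_le hb
  have hC0 : ENNReal.ofReal C ≠ 0 := (ENNReal.ofReal_pos.2 hC).ne'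
  refine ⟨ENNReal.ofReal C, ENNReal.ofReal_ne_top, fun x t N hN ↦ ?_⟩
  rcases eq_or_ne x 0 with rfl | hx
  · rw [enorm_zero, ENNReal.zero_rpow_of_neg (by norm_num), ENNReal.mul_top hC0]
    exact le_top
  · rw [← intervalIntegral.integral_of_le hN, ← ofReal_norm x,
      ENNReal.ofReal_rpow_of_pos (norm_pos_iff.2 hx), ← ENNReal.ofReal_mul hC.le, ← ofReal_norm]
    exact ENNReal.ofReal_le_ofReal (hle x t N hx hN)

theorem exists_lintegral_truncated_oscInt_le (hb : 2 < b) :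
    ∃ A : ℝ≥0∞, A ≠ ⊤ ∧ ∀ (τ : ℝ → ℝ) (N : ℝ) (G : ℝ → ℂ), Measurable τ → 0 ≤ N →
      Measurable G → IntegrableOn G (Set.Ioi 0) →
      ∫⁻ x in Metric.ball 0 1, ‖∫ η in Set.Ioc 0 N, oscFactor b x (τ x) η * G η‖ₑ ^ 2 ≤
        A * ∫⁻ η in Set.Ioi 0, ‖G η‖ₑ ^ 2 := by
  obtain ⟨C, hC, hK⟩ := exists_enorm_integral_oscFactor_le hb
  set P := ∫⁻ u : ℝ in Metric.ball 0 (2 * 1), ‖u‖ₑ ^ (-(1 / 2) : ℝ)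
  have hP : P ≠ ⊤ := (lintegral_enorm_rpow_lt_top (by norm_num) _).ne
  refine ⟨C * P, ENNReal.mul_ne_top hC hP, fun τ N G hτ hN hGm hG ↦ ?_⟩
  have hm : Measurable fun z : ℝ × ℝ ↦ oscFactor b z.1 (τ z.1) z.2 :=
    measurable_oscFactor_comp (by linarith) measurable_fst (hτ.comp measurable_fst) measurable_snd
  have hk : Measurable fun z : ℝ × ℝ ↦ C * ‖z.1 - z.2‖ₑ ^ (-(1 / 2) : ℝ) := by fun_prop
  have : IsFiniteMeasure (volume.restrict (Metric.ball (0 : ℝ) 1)) :=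
    isFiniteMeasure_restrict.2 measure_ball_lt_top.ne
  have hkA : ∀ᵐ x ∂volume.restrict (Metric.ball (0 : ℝ) 1),
      ∫⁻ y in Metric.ball 0 1, C * ‖x - y‖ₑ ^ (-(1 / 2) : ℝ) ≤ C * P := by
    filter_upwards [ae_restrict_mem Metric.isOpen_ball.measurableSet] with x hx
    rw [lintegral_const_mul _ (by fun_prop)]
    exact mul_le_mul_right (lintegral_enorm_sub_rpow_le hx) C
  have hle : ∀ x x', ‖∫ η in Set.Ioc 0 N,
      conj (oscFactor b x (τ x) η) * oscFactor b x' (τ x') η‖ₑ ≤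
        C * ‖x - x'‖ₑ ^ (-(1 / 2) : ℝ) := fun x x' ↦ by
    simp only [conj_oscFactor, oscFactor_mul]
    rw [enorm_sub_rev, ← neg_add_eq_sub]
    exact hK _ _ N hN
  calc _ ≤ C * P * ∫⁻ η in Set.Ioc 0 N, ‖G η‖ₑ ^ 2 :=
        lintegral_enorm_kernel_sq_le hm (fun z ↦ (norm_oscFactor _ _ _ _).le) hk
          (fun x y ↦ by rw [enorm_sub_rev]) hkA hle hGm (hG.mono_set Set.Ioc_subset_Ioi_self)
    _ ≤ _ := mul_le_mul_right (lintegral_mono_set Set.Ioc_subset_Ioi_self) _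

theorem integrableOn_oscFactor_mul (hb : 0 ≤ b) (hG : IntegrableOn G (Set.Ioi 0)) (x t : ℝ) :
    IntegrableOn (fun η ↦ oscFactor b x t η * G η) (Set.Ioi 0) :=
  Integrable.bdd_mul hG (c := 1) ((continuous_oscFactor hb).comp
    (by fun_prop : Continuous fun η : ℝ ↦ (x, t, η))).aestronglyMeasurable
    (.of_forall fun η ↦ (norm_oscFactor b x t η).le)

theorem tendsto_truncated_oscInt (hb : 0 ≤ b) (hG : IntegrableOn G (Set.Ioi 0)) (x t : ℝ) :
    Filter.Tendsto (fun n : ℕ ↦ ∫ η in Set.Ioc 0 (n : ℝ), oscFactor b x t η * G η)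
      Filter.atTop (nhds (oscInt b G x t)) := by
  simpa only [intervalIntegral.integral_of_le (Nat.cast_nonneg _), oscInt] using
    intervalIntegral_tendsto_integral_Ioi (μ := volume) 0
      (integrableOn_oscFactor_mul hb hG x t) tendsto_natCast_atTop_atTop

theorem exists_lintegral_oscSup_le (hb : 2 < b) :
    ∃ A : ℝ≥0∞, A ≠ ⊤ ∧ ∀ G : ℝ → ℂ, Measurable G → IntegrableOn G (Set.Ioi 0) →
      ∫⁻ x in Metric.ball 0 1, oscSup b G x ≤ A * ∫⁻ η in Set.Ioi 0, ‖G η‖ₑ ^ 2 := by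
  have hb0 : 0 ≤ b := by linarith
  obtain ⟨A, hA, truncated_le⟩ := exists_lintegral_truncated_oscInt_le hb
  refine ⟨A, hA, fun G hGm hG ↦ ?_⟩
  simp_rw [oscSup_eq_iSup_denseSeq hb0 hG]
  refine lintegral_iSup_le_of_forall_measurable (F := fun x t ↦ ‖oscInt b G x t‖ₑ ^ 2)
    ((measurable_oscInt hb0 hGm).enorm.pow_const 2) (fun τ hτ ↦ ?_) _
  set U : ℕ → ℝ → ℂ := fun n x ↦ ∫ η in Set.Ioc 0 (n : ℝ), oscFactor b x (τ x) η * G η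
  have hUm (n : ℕ) : Measurable (U n) := by
    have : Measurable fun z : ℝ × ℝ ↦ oscFactor b z.1 (τ z.1) z.2 * G z.2 :=
      (measurable_oscFactor_comp hb0 measurable_fst (hτ.comp measurable_fst) measurable_snd).mul
        (hGm.comp measurable_snd)
    exact this.stronglyMeasurable.integral_prod_right'.measurable
  have hlim (x : ℝ) : Filter.Tendsto (fun n ↦ ‖U n x‖ₑ ^ 2) Filter.atTop
      (nhds (‖oscInt b G x (τ x)‖ₑ ^ 2)) :=
    ((ENNReal.continuous_pow 2).tendsto _).comp
      ((continuous_enorm.tendsto _).comp (tendsto_truncated_oscInt hb0 hG x (τ x)))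
  calc ∫⁻ x in Metric.ball 0 1, ‖oscInt b G x (τ x)‖ₑ ^ 2
      = ∫⁻ x in Metric.ball 0 1, Filter.liminf (fun n ↦ ‖U n x‖ₑ ^ 2) Filter.atTop :=
        lintegral_congr fun x ↦ (hlim x).liminf_eq.symm
    _ ≤ Filter.liminf (fun n ↦ ∫⁻ x in Metric.ball 0 1, ‖U n x‖ₑ ^ 2) Filter.atTop :=
        lintegral_liminf_le fun n ↦ (hUm n).enorm.pow_const 2
    _ ≤ A * ∫⁻ η in Set.Ioi 0, ‖G η‖ₑ ^ 2 :=
        Filter.liminf_le_of_frequently_le' <| .of_forall fun n ↦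
          truncated_le τ n G hτ (Nat.cast_nonneg n) hGm hG

end OscInt

/-! ### Asymptotics for Bessel's equation -/

section Bessel

theorem exists_norm_sub_le_div {F : Type*} [NormedAddCommGroup F] [NormedSpace ℝ F]
    [CompleteSpace F] {f f' : ℝ → F} {K : ℝ} (hf : ∀ s, 1 ≤ s → HasDerivAt f (f' s) s)
    (hf' : ∀ s, 1 ≤ s → ‖f' s‖ ≤ K / s ^ 2) : ∃ L : F, ∀ s, 1 ≤ s → ‖f s - L‖ ≤ K / s := by
  have hK : 0 ≤ K := by simpa using (norm_nonneg _).trans (hf' 1 le_rfl)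
  have increment_le (s x : ℝ) (hs : 1 ≤ s) (hsx : s ≤ x) : ‖f x - f s‖ ≤ K / s := by
    have hne (y : ℝ) (hy : y ∈ Set.Icc s x) : y ≠ 0 := (one_pos.trans_le (hs.trans hy.1)).ne'
    have hB (y : ℝ) (hy : y ∈ Set.Icc s x) :
        HasDerivAt (fun y ↦ K / s - K * y⁻¹) (K / y ^ 2) y :=
      (((hasDerivAt_inv (hne y hy)).const_mul K).const_sub (K / s)).congr_deriv (by ring)
    calc ‖f x - f s‖ ≤ K / s - K * x⁻¹ :=
          image_norm_le_of_norm_deriv_right_le_deriv_boundary' (f := fun y ↦ f y - f s)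
            (fun y hy ↦ ((hf y (hs.trans hy.1)).sub_const _).continuousAt.continuousWithinAt)
            (fun y hy ↦ ((hf y (hs.trans hy.1)).sub_const _).hasDerivWithinAt)
            (by simp [div_eq_mul_inv])
            (fun y hy ↦ (hB y hy).continuousAt.continuousWithinAt)
            (fun y hy ↦ (hB y (Set.Ico_subset_Icc_self hy)).hasDerivWithinAt)
            (fun y hy ↦ hf' y (hs.trans hy.1)) (Set.right_mem_Icc.2 hsx)
      _ ≤ K / s := sub_le_self _ (mul_nonneg hK (inv_nonneg.2 (by linarith)))
  have hcau : CauchySeq f := by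
    refine Metric.cauchySeq_iff'.2 fun ε hε ↦ ?_
    have htend : Filter.Tendsto (fun s ↦ K / s) Filter.atTop (nhds 0) :=
      tendsto_const_nhds.div_atTop Filter.tendsto_id
    obtain ⟨s, hsε, hs⟩ :=
      ((htend.eventually_lt_const hε).and (Filter.eventually_ge_atTop 1)).exists
    exact ⟨s, fun x hx ↦ (dist_eq_norm _ _).trans_lt ((increment_le s x hs hx).trans_lt hsε)⟩
  obtain ⟨L, hL⟩ := cauchySeq_tendsto_of_complete hcau
  refine ⟨L, fun s hs ↦ ?_⟩
  rw [norm_sub_rev]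
  exact le_of_tendsto (hL.sub_const (f s)).norm
    ((Filter.eventually_ge_atTop s).mono fun x hx ↦ increment_le s x hs hx)

section PerturbedOscillator

variable {φ φ' : ℝ → ℂ} {c : ℝ} (h0 : ∀ s, 0 < s → HasDerivAt φ (φ' s) s)
  (h1 : ∀ s, 0 < s → HasDerivAt φ' (((c / s ^ 2 - 1 : ℝ) : ℂ) * φ s) s)

include h0 h1

-- The derivative of the free energy `‖φ‖² + ‖φ'‖²` is at most `|c| / s²` times the energy.
theorem antitoneOn_energy_mul_exp :
    AntitoneOn (fun s ↦ (‖φ s‖ ^ 2 + ‖φ' s‖ ^ 2) * exp (|c| * s⁻¹)) (Set.Ioi 0) := by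
  have hderiv (s : ℝ) (hs : 0 < s) :=
    ((h0 s hs).norm_sq.add (h1 s hs).norm_sq).mul ((hasDerivAt_inv hs.ne').const_mul |c|).exp
  refine antitoneOn_of_hasDerivWithinAt_nonpos (convex_Ioi 0)
    (fun s hs ↦ (hderiv s hs).continuousAt.continuousWithinAt)
    (fun s hs ↦ (hderiv s (interior_subset hs)).hasDerivWithinAt) fun s _ ↦ ?_
  have inner_eq : ⟪φ' s, ((c / s ^ 2 - 1 : ℝ) : ℂ) * φ s⟫_ℝ =
      (s ^ 2)⁻¹ * (c * ⟪φ s, φ' s⟫_ℝ) - ⟪φ s, φ' s⟫_ℝ := by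
    rw [← Complex.real_smul, inner_smul_right, real_inner_comm]
    ring
  have perturbation_le : 2 * (c * ⟪φ s, φ' s⟫_ℝ) ≤ |c| * (‖φ s‖ ^ 2 + ‖φ' s‖ ^ 2) := by
    have : c * ⟪φ s, φ' s⟫_ℝ ≤ |c| * (‖φ s‖ * ‖φ' s‖) := by
      refine (le_abs_self _).trans ?_
      rw [abs_mul]
      exact mul_le_mul_of_nonneg_left (abs_real_inner_le_norm _ _) (abs_nonneg c)
    calc 2 * (c * ⟪φ s, φ' s⟫_ℝ) ≤ 2 * (|c| * (‖φ s‖ * ‖φ' s‖)) := by linarith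
      _ = |c| * (2 * ‖φ s‖ * ‖φ' s‖) := by ring
      _ ≤ |c| * (‖φ s‖ ^ 2 + ‖φ' s‖ ^ 2) := by
          gcongr
          exact two_mul_le_add_sq _ _
  have hweight : 0 ≤ exp (|c| * s⁻¹) * (s ^ 2)⁻¹ := by positivity
  simp only [Pi.add_apply]
  rw [inner_eq]
  linear_combination mul_le_mul_of_nonneg_left perturbation_le hweight

theorem exists_bound_of_perturbed_oscillator : ∃ M, ∀ s, 1 ≤ s → ‖φ s‖ ≤ M := by
  refine ⟨√((‖φ 1‖ ^ 2 + ‖φ' 1‖ ^ 2) * exp (|c| * 1⁻¹)), fun s hs ↦ Real.le_sqrt_of_sq_le ?_⟩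
  have hs0 : 0 < s := one_pos.trans_le hs
  calc ‖φ s‖ ^ 2 ≤ (‖φ s‖ ^ 2 + ‖φ' s‖ ^ 2) * 1 := by linarith [sq_nonneg ‖φ' s‖]
    _ ≤ (‖φ s‖ ^ 2 + ‖φ' s‖ ^ 2) * exp (|c| * s⁻¹) := by
        gcongr
        exact Real.one_le_exp (by positivity)
    _ ≤ _ := antitoneOn_energy_mul_exp h0 h1 (Set.mem_Ioi.2 one_pos) hs0 hs

theorem exists_norm_add_mul_sub_exp_le {κ : ℂ} (hre : κ.re = 0) (hsq : κ ^ 2 = -1) {M : ℝ}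
    (hM : ∀ s, 1 ≤ s → ‖φ s‖ ≤ M) :
    ∃ L : ℂ, ∀ s : ℝ, 1 ≤ s → ‖φ' s + κ * φ s - L * Complex.exp (κ * s)‖ ≤ |c| * M / s := by
  have norm_exp (s : ℝ) : ‖Complex.exp (-(κ * s))‖ = 1 := by simp [Complex.norm_exp, hre]
  have hexp (s : ℝ) : HasDerivAt (fun s : ℝ ↦ Complex.exp (-(κ * s)))
      (Complex.exp (-(κ * s)) * -κ) s := by
    simpa using ((hasDerivAt_id s).ofReal_comp.const_mul κ).neg.cexp
  obtain ⟨L, hL⟩ := exists_norm_sub_le_div (K := |c| * M)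
    (f := fun s ↦ (φ' s + κ * φ s) * Complex.exp (-(κ * s)))
    (f' := fun s ↦ ((c / s ^ 2 : ℝ) : ℂ) * φ s * Complex.exp (-(κ * s)))
    (fun s hs ↦ by
      have hs0 : 0 < s := one_pos.trans_le hs
      refine (((h1 s hs0).add ((h0 s hs0).const_mul κ)).mul (hexp s)).congr_deriv ?_
      simp only [Pi.add_apply]
      push_cast
      linear_combination (-(φ s * Complex.exp (-(κ * s)))) * hsq)
    (fun s hs ↦ by
      rw [norm_mul, norm_mul, norm_exp, mul_one, Complex.norm_real, Real.norm_eq_abs, abs_div,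
        abs_of_nonneg (sq_nonneg s), div_mul_eq_mul_div]
      gcongr
      exact hM s hs)
  refine ⟨L, fun s hs ↦ (le_of_eq ?_).trans (hL s hs)⟩
  rw [← mul_one ‖_ - _‖, ← norm_exp s, ← norm_mul, sub_mul, mul_assoc L, ← Complex.exp_add,
    add_neg_cancel, Complex.exp_zero, mul_one]

theorem exists_asymptotics_of_perturbed_oscillator :
    ∃ (α β : ℂ) (K : ℝ), ∀ s : ℝ, 1 ≤ s →
      ‖φ s - (α * Complex.exp (Complex.I * s) + β * Complex.exp (-Complex.I * s))‖ ≤ K / s := by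
  obtain ⟨M, hM⟩ := exists_bound_of_perturbed_oscillator h0 h1
  obtain ⟨A, hA⟩ := exists_norm_add_mul_sub_exp_le h0 h1 Complex.I_re Complex.I_sq hM
  obtain ⟨B, hB⟩ := exists_norm_add_mul_sub_exp_le h0 h1 (κ := -Complex.I) (by simp) (by simp) hM
  refine ⟨-Complex.I / 2 * A, Complex.I / 2 * B, |c| * M, fun s hs ↦ ?_⟩
  have decomposition : φ s - (-Complex.I / 2 * A * Complex.exp (Complex.I * s) +
      Complex.I / 2 * B * Complex.exp (-Complex.I * s)) =
      -Complex.I / 2 * (φ' s + Complex.I * φ s - A * Complex.exp (Complex.I * s)) +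
      Complex.I / 2 * (φ' s + -Complex.I * φ s - B * Complex.exp (-Complex.I * s)) := by
    linear_combination φ s * Complex.I_sq
  rw [decomposition]
  refine (norm_add_le _ _).trans ?_
  rw [norm_mul, norm_mul, norm_div, norm_div, norm_neg, Complex.norm_I, Complex.norm_ofNat]
  linarith [hA s hs, hB s hs]

end PerturbedOscillator

-- `φ s = s ^ m * j s` solves `φ'' + (1 - m (m - 1) / s²) φ = 0`.
theorem hasDerivAt_deriv_rpow_mul_of_bessel {j j' j'' : ℝ → ℂ} {m s : ℝ} (hs : 0 < s)
    (h0 : HasDerivAt j (j' s) s) (h1 : HasDerivAt j' (j'' s) s)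
    (hode : (s : ℂ) ^ 2 * (j s + j'' s) + 2 * m * s * j' s = 0) :
    HasDerivAt (fun s ↦ ((m * s ^ (m - 1) : ℝ) : ℂ) * j s + ((s ^ m : ℝ) : ℂ) * j' s)
      (((m * (m - 1) / s ^ 2 - 1 : ℝ) : ℂ) * (((s ^ m : ℝ) : ℂ) * j s)) s := by
  have hpow (r : ℝ) : HasDerivAt (fun s : ℝ ↦ s ^ r) (r * s ^ (r - 1)) s :=
    hasDerivAt_rpow_const (Or.inl hs.ne')
  refine ((((hpow (m - 1)).const_mul m).ofReal_comp.mul h0).add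
    ((hpow m).ofReal_comp.mul h1)).congr_deriv ?_
  have hsc : (s : ℂ) ≠ 0 := by exact_mod_cast hs.ne'
  rw [rpow_sub_one hs.ne', rpow_sub_one hs.ne']
  push_cast
  field_simp
  linear_combination ((s ^ m : ℝ) : ℂ) * hode

theorem exists_asymptotics_of_bessel {j j' j'' : ℝ → ℂ} {m V : ℝ} (hm : 0 ≤ m)
    (h0 : ∀ s, 0 < s → HasDerivAt j (j' s) s) (h1 : ∀ s, 0 < s → HasDerivAt j' (j'' s) s)
    (hode : ∀ s : ℝ, 0 < s → (s : ℂ) ^ 2 * (j s + j'' s) + 2 * m * s * j' s = 0)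
    (hV : ∀ s, 0 < s → ‖j s‖ ≤ V) :
    ∃ (α β : ℂ) (C : ℝ), ∀ s : ℝ, 0 < s →
      ‖((s ^ m : ℝ) : ℂ) * j s -
        (α * Complex.exp (Complex.I * s) + β * Complex.exp (-Complex.I * s))‖ ≤ C / (1 + s) := by
  obtain ⟨α, β, K, large⟩ := exists_asymptotics_of_perturbed_oscillator
    (φ := fun s ↦ ((s ^ m : ℝ) : ℂ) * j s)
    (fun s hs ↦ (hasDerivAt_rpow_const (p := m) (Or.inl hs.ne')).ofReal_comp.mul (h0 s hs))
    (fun s hs ↦ hasDerivAt_deriv_rpow_mul_of_bessel hs (h0 s hs) (h1 s hs) (hode s hs))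
  have hK : 0 ≤ K := by simpa using (norm_nonneg _).trans (large 1 le_rfl)
  have hV0 : 0 ≤ V := (norm_nonneg _).trans (hV 1 one_pos)
  refine ⟨α, β, 2 * K + 2 * (V + (‖α‖ + ‖β‖)), fun s hs ↦ ?_⟩
  rw [le_div_iff₀ (by linarith)]
  rcases le_total 1 s with h | h
  · have := (le_div_iff₀ hs).1 (large s h)
    nlinarith [norm_nonneg α, norm_nonneg β]
  · have small : ‖((s ^ m : ℝ) : ℂ) * j s - (α * Complex.exp (Complex.I * s) +
        β * Complex.exp (-Complex.I * s))‖ ≤ V + (‖α‖ + ‖β‖) := by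
      refine (norm_sub_le _ _).trans (add_le_add ?_ ((norm_add_le _ _).trans_eq ?_))
      · rw [norm_mul, Complex.norm_real, norm_of_nonneg (rpow_nonneg hs.le m)]
        exact (mul_le_of_le_one_left (norm_nonneg _) (rpow_le_one hs.le h hm)).trans (hV s hs)
      · simp [Complex.norm_exp]
    nlinarith [norm_nonneg α, norm_nonneg β]

end Bessel

/-! ### Plane waves averaged over the sphere -/

theorem hasDerivAt_integral_of_continuous {X : Type*} [TopologicalSpace X] [CompactSpace X]
    [MeasurableSpace X] [OpensMeasurableSpace X] {μ : Measure X} [IsFiniteMeasure μ]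
    {F F' : ℝ → X → ℂ} (hF : ∀ s, Continuous (F s)) (hF' : Continuous (Function.uncurry F'))
    (hd : ∀ s y, HasDerivAt (fun s ↦ F s y) (F' s y) s) (s : ℝ) :
    HasDerivAt (fun s ↦ ∫ y, F s y ∂μ) (∫ y, F' s y ∂μ) s := by
  have integrable_of_continuous {g : X → ℂ} (hg : Continuous g) : Integrable g μ :=
    hg.integrable_of_hasCompactSupport (.of_compactSpace g)
  obtain ⟨B, hB⟩ := ((isCompact_closedBall s 1).prod isCompact_univ).exists_bound_of_continuousOn
    hF'.continuousOn
  exact (hasDerivAt_integral_of_dominated_loc_of_deriv_le (bound := fun _ ↦ B)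
    (Metric.closedBall_mem_nhds s one_pos)
    (.of_forall fun s ↦ (integrable_of_continuous (hF s)).aestronglyMeasurable)
    (integrable_of_continuous (hF s))
    (integrable_of_continuous (hF'.comp (Continuous.prodMk_right s))).aestronglyMeasurable
    (.of_forall fun y t ht ↦ hB (t, y) ⟨ht, Set.mem_univ y⟩) (integrable_const B)
    (.of_forall fun y t _ ↦ hd t y)).2

theorem hasDerivAt_cexp_inner {E : Type*} [NormedAddCommGroup E] [InnerProductSpace ℝ E]
    {γ : ℝ → E} {v : E} {s : ℝ} (hγ : HasDerivAt γ v s) (y : E) :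
    HasDerivAt (fun s ↦ Complex.exp (Complex.I * (⟪y, γ s⟫_ℝ : ℝ)))
      (Complex.I * (⟪y, v⟫_ℝ : ℝ) * Complex.exp (Complex.I * (⟪y, γ s⟫_ℝ : ℝ))) s :=
  hasDerivAt_cexp_I_mul (by simpa using (hasDerivAt_const s y).inner ℝ hγ)

section SphereWave

variable {E : Type*} [NormedAddCommGroup E] [InnerProductSpace ℝ E] [FiniteDimensional ℝ E]
  [MeasurableSpace E] [BorelSpace E]

open Metric Pointwise in
theorem measurePreserving_toSphere (L : E ≃ₗᵢ[ℝ] E) :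
    MeasurePreserving (fun ω : sphere (0 : E) 1 ↦ (⟨L ω, by simp⟩ : sphere (0 : E) 1))
      (volume : Measure E).toSphere (volume : Measure E).toSphere := by
  have hT : Continuous fun ω : sphere (0 : E) 1 ↦ (⟨L ω, by simp⟩ : sphere (0 : E) 1) := by
    fun_prop
  refine ⟨hT.measurable, Measure.ext fun s hs ↦ ?_⟩
  rw [Measure.map_apply hT.measurable hs, Measure.toSphere_apply' _ (hT.measurable hs),
    Measure.toSphere_apply' _ hs,
    ← L.measurePreserving.measure_preimage_emb L.toHomeomorph.measurableEmbedding
      (Set.Ioo (0 : ℝ) 1 • (Subtype.val '' s))]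
  congr 2
  ext y
  constructor
  · rintro ⟨r, hr, _, ⟨ω, hω, rfl⟩, rfl⟩
    exact ⟨r, hr, L ω, ⟨_, hω, rfl⟩, (L.map_smul r ω).symm⟩
  · rintro ⟨r, hr, _, ⟨ω, hω, rfl⟩, hy⟩
    refine ⟨r, hr, L.symm ω, ⟨⟨L.symm ω, by simp⟩, by simpa using hω, rfl⟩, ?_⟩
    exact L.injective ((L.map_smul r _).trans (by simpa using hy))

/-- The plane wave with frequency `v` integrated over the unit sphere, that is, the Fourier
transform of the surface measure; up to normalization and a power of `‖v‖` it is the Bessel function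
of order `(finrank ℝ E - 2) / 2` at `‖v‖`. -/
def sphereWave (v : E) : ℂ :=
  ∫ ω : Metric.sphere (0 : E) 1, Complex.exp (Complex.I * (⟪(ω : E), v⟫_ℝ : ℝ))
    ∂(volume : Measure E).toSphere

theorem sphereWave_eq_of_norm_eq {v w : E} (h : ‖v‖ = ‖w‖) : sphereWave v = sphereWave w := by
  set L : E ≃ₗᵢ[ℝ] E := (ℝ ∙ (v - w))ᗮ.reflection
  have hL : L v = w := Submodule.reflection_sub h
  have hT := measurePreserving_toSphere L
  have change_variables := integral_map hT.aemeasurable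
    (f := fun ω : Metric.sphere (0 : E) 1 ↦ Complex.exp (Complex.I * (⟪(ω : E), w⟫_ℝ : ℝ)))
    (Continuous.aestronglyMeasurable (by fun_prop))
  rw [hT.map_eq] at change_variables
  rw [sphereWave, sphereWave, change_variables]
  simp only [← hL, L.inner_map_map]

theorem norm_sphereWave_le (v : E) :
    ‖sphereWave v‖ ≤ (volume : Measure E).toSphere.real Set.univ := by
  refine (norm_integral_le_of_norm_le_const (C := 1) (.of_forall fun ω ↦ ?_)).trans_eq
    (one_mul _)
  rw [Complex.norm_exp_I_mul_ofReal]

section Curve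

variable {γ γ' γ'' : ℝ → E} (hγ : ∀ s, HasDerivAt γ (γ' s) s)

include hγ

theorem hasDerivAt_sphereWave (hγ' : Continuous γ') (s : ℝ) :
    HasDerivAt (fun s ↦ sphereWave (γ s))
      (∫ ω : Metric.sphere (0 : E) 1, Complex.I * (⟪(ω : E), γ' s⟫_ℝ : ℝ) *
        Complex.exp (Complex.I * (⟪(ω : E), γ s⟫_ℝ : ℝ)) ∂(volume : Measure E).toSphere) s := by
  have hγc : Continuous γ := continuous_iff_continuousAt.2 fun s ↦ (hγ s).continuousAt
  refine hasDerivAt_integral_of_continuous (fun s ↦ ?_) ?_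
    (fun s (ω : Metric.sphere (0 : E) 1) ↦ hasDerivAt_cexp_inner (hγ s) (ω : E)) s
  · fun_prop
  · simp only [Function.uncurry_def]
    fun_prop

theorem hasDerivAt_deriv_sphereWave (hγ' : ∀ s, HasDerivAt γ' (γ'' s) s)
    (hγ'' : Continuous γ'') (s : ℝ) :
    HasDerivAt (fun s ↦ ∫ ω : Metric.sphere (0 : E) 1, Complex.I * (⟪(ω : E), γ' s⟫_ℝ : ℝ) *
        Complex.exp (Complex.I * (⟪(ω : E), γ s⟫_ℝ : ℝ)) ∂(volume : Measure E).toSphere)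
      (∫ ω : Metric.sphere (0 : E) 1,
        (Complex.I * (⟪(ω : E), γ'' s⟫_ℝ : ℝ) - (⟪(ω : E), γ' s⟫_ℝ : ℝ) ^ 2) *
          Complex.exp (Complex.I * (⟪(ω : E), γ s⟫_ℝ : ℝ)) ∂(volume : Measure E).toSphere) s := by
  have hγc : Continuous γ := continuous_iff_continuousAt.2 fun s ↦ (hγ s).continuousAt
  have hγc' : Continuous γ' := continuous_iff_continuousAt.2 fun s ↦ (hγ' s).continuousAt
  have pointwise (s : ℝ) (ω : Metric.sphere (0 : E) 1) :
      HasDerivAt (fun s ↦ Complex.I * (⟪(ω : E), γ' s⟫_ℝ : ℝ) *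
        Complex.exp (Complex.I * (⟪(ω : E), γ s⟫_ℝ : ℝ)))
        ((Complex.I * (⟪(ω : E), γ'' s⟫_ℝ : ℝ) - (⟪(ω : E), γ' s⟫_ℝ : ℝ) ^ 2) *
          Complex.exp (Complex.I * (⟪(ω : E), γ s⟫_ℝ : ℝ))) s := by
    have inner_deriv : HasDerivAt (fun s ↦ ⟪(ω : E), γ' s⟫_ℝ) ⟪(ω : E), γ'' s⟫_ℝ s := by
      simpa using (hasDerivAt_const s (ω : E)).inner ℝ (hγ' s)
    refine ((inner_deriv.ofReal_comp.const_mul Complex.I).mul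
      (hasDerivAt_cexp_inner (hγ s) ω)).congr_deriv ?_
    linear_combination (⟪(ω : E), γ' s⟫_ℝ : ℂ) ^ 2 *
      Complex.exp (Complex.I * (⟪(ω : E), γ s⟫_ℝ : ℝ)) * Complex.I_sq
  refine hasDerivAt_integral_of_continuous (fun s ↦ ?_) ?_ pointwise s
  · fun_prop
  · simp only [Function.uncurry_def]
    fun_prop

end Curve

-- The second derivative of the rotation-invariant `sphereWave` along the circle through `v` and
-- `w` vanishes.
theorem integral_inner_add_sq_inner_mul_cexp {v w : E} (h : ‖v‖ = ‖w‖) (hvw : ⟪v, w⟫_ℝ = 0) :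
    ∫ ω : Metric.sphere (0 : E) 1,
      (Complex.I * (⟪(ω : E), v⟫_ℝ : ℝ) + (⟪(ω : E), w⟫_ℝ : ℝ) ^ 2) *
        Complex.exp (Complex.I * (⟪(ω : E), v⟫_ℝ : ℝ)) ∂(volume : Measure E).toSphere = 0 := by
  have hγ (φ : ℝ) : HasDerivAt (fun φ ↦ cos φ • v + sin φ • w) (-sin φ • v + cos φ • w) φ :=
    ((hasDerivAt_cos φ).smul_const v).add ((hasDerivAt_sin φ).smul_const w)
  have hγ' (φ : ℝ) : HasDerivAt (fun φ ↦ -sin φ • v + cos φ • w) (-cos φ • v + -sin φ • w) φ :=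
    ((hasDerivAt_sin φ).neg.smul_const v).add ((hasDerivAt_cos φ).smul_const w)
  have norm_curve (φ : ℝ) : ‖cos φ • v + sin φ • w‖ = ‖v‖ := by
    rw [← sq_eq_sq₀ (norm_nonneg _) (norm_nonneg _), norm_add_sq_real, inner_smul_left,
      inner_smul_right, hvw, norm_smul, norm_smul, ← h, mul_pow, mul_pow, Real.norm_eq_abs,
      Real.norm_eq_abs, sq_abs, sq_abs]
    linear_combination ‖v‖ ^ 2 * sin_sq_add_cos_sq φ
  have first := hasDerivAt_sphereWave hγ (by fun_prop)
  simp only [fun φ ↦ sphereWave_eq_of_norm_eq (norm_curve φ)] at first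
  have second := hasDerivAt_deriv_sphereWave hγ hγ' (by fun_prop) 0
  simp only [fun φ ↦ (first φ).unique (hasDerivAt_const φ (sphereWave v))] at second
  rw [← neg_eq_zero, ← integral_neg, ← second.unique (hasDerivAt_const _ _)]
  refine integral_congr_ae (.of_forall fun ω ↦ ?_)
  simp only [sin_zero, cos_zero, neg_zero, zero_smul, one_smul, add_zero, zero_add, neg_smul,
    inner_neg_right, Complex.ofReal_neg]
  ring

theorem sum_integral_sq_inner_mul_cexp {ι : Type*} [Fintype ι] (b : OrthonormalBasis ι ℝ E)
    (v : E) :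
    ∑ k, ∫ ω : Metric.sphere (0 : E) 1, (⟪(ω : E), b k⟫_ℝ : ℂ) ^ 2 *
      Complex.exp (Complex.I * (⟪(ω : E), v⟫_ℝ : ℝ)) ∂(volume : Measure E).toSphere =
      sphereWave v := by
  rw [← integral_finsetSum _ fun k _ ↦ Continuous.integrable_of_hasCompactSupport
    (by fun_prop) (.of_compactSpace _)]
  refine integral_congr_ae (.of_forall fun ω ↦ ?_)
  have parseval : ∑ k, (⟪(ω : E), b k⟫_ℝ : ℂ) ^ 2 = 1 := by
    have := b.sum_sq_norm_inner_left (ω : E)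
    rw [norm_eq_of_mem_sphere ω, one_pow] at this
    simp only [Real.norm_eq_abs, sq_abs] at this
    exact_mod_cast this
  beta_reduce
  rw [← Finset.sum_mul, parseval, one_mul]

open Classical in
theorem sphereWave_bessel {ι : Type*} [Fintype ι] (b : OrthonormalBasis ι ℝ E) (i : ι) (s : ℝ) :
    (s : ℂ) ^ 2 * (sphereWave (s • b i) - ∫ ω : Metric.sphere (0 : E) 1,
        (⟪(ω : E), b i⟫_ℝ : ℂ) ^ 2 * Complex.exp (Complex.I * (⟪(ω : E), s • b i⟫_ℝ : ℝ))
        ∂(volume : Measure E).toSphere) +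
      (Fintype.card ι - 1) * s * ∫ ω : Metric.sphere (0 : E) 1, Complex.I * (⟪(ω : E), b i⟫_ℝ : ℝ) *
        Complex.exp (Complex.I * (⟪(ω : E), s • b i⟫_ℝ : ℝ))
        ∂(volume : Measure E).toSphere = 0 := by
  set J₁ := ∫ ω : Metric.sphere (0 : E) 1, Complex.I * (⟪(ω : E), b i⟫_ℝ : ℝ) *
    Complex.exp (Complex.I * (⟪(ω : E), s • b i⟫_ℝ : ℝ)) ∂(volume : Measure E).toSphere
  set J₂ : ι → ℂ := fun k ↦ ∫ ω : Metric.sphere (0 : E) 1, (⟪(ω : E), b k⟫_ℝ : ℂ) ^ 2 *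
    Complex.exp (Complex.I * (⟪(ω : E), s • b i⟫_ℝ : ℝ)) ∂(volume : Measure E).toSphere
  have moment (k : ι) (hk : k ∈ Finset.univ.erase i) : s * J₁ + (s : ℂ) ^ 2 * J₂ k = 0 := by
    have rotation := integral_inner_add_sq_inner_mul_cexp (v := s • b i) (w := s • b k)
      (by simp [norm_smul])
      (by simp [inner_smul_left, inner_smul_right,
        b.inner_eq_zero (Finset.ne_of_mem_erase hk).symm])
    rw [← integral_const_mul, ← integral_const_mul, ← integral_add, ← rotation]
    · refine integral_congr_ae (.of_forall fun ω ↦ ?_)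
      simp only [inner_smul_right, Complex.ofReal_mul]
      ring
    all_goals exact Continuous.integrable_of_hasCompactSupport (by fun_prop) (.of_compactSpace _)
  have sum_moments := Finset.sum_eq_zero moment
  have trace : J₂ i + ∑ k ∈ Finset.univ.erase i, J₂ k = sphereWave (s • b i) :=
    (Finset.add_sum_erase _ J₂ (Finset.mem_univ i)).trans (sum_integral_sq_inner_mul_cexp b _)
  rw [Finset.sum_add_distrib, ← Finset.mul_sum, ← Finset.mul_sum, Finset.sum_const,
    Finset.card_erase_of_mem (Finset.mem_univ i), Finset.card_univ, nsmul_eq_mul,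
    Nat.cast_pred (Fintype.card_pos_iff.2 ⟨i⟩)] at sum_moments
  linear_combination sum_moments - (s : ℂ) ^ 2 * trace

theorem exists_asymptotics_sphereWave [Nontrivial E] :
    ∃ (α β : ℂ) (C : ℝ), ∀ x : E, x ≠ 0 →
      ‖((‖x‖ ^ ((finrank ℝ E - 1 : ℝ) / 2) : ℝ) : ℂ) * sphereWave x -
        (α * Complex.exp (Complex.I * ‖x‖) + β * Complex.exp (-Complex.I * ‖x‖))‖ ≤
        C / (1 + ‖x‖) := by
  set b := stdOrthonormalBasis ℝ E
  have hd : 0 < finrank ℝ E := Module.finrank_pos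
  set v : E := b ⟨0, hd⟩
  have hγ (s : ℝ) : HasDerivAt (fun s : ℝ ↦ s • v) v s := by
    simpa using (hasDerivAt_id s).smul_const v
  obtain ⟨α, β, C, h⟩ := exists_asymptotics_of_bessel
    (m := (finrank ℝ E - 1 : ℝ) / 2)
    (div_nonneg (sub_nonneg.2 (mod_cast hd)) two_pos.le)
    (fun s _ ↦ hasDerivAt_sphereWave hγ continuous_const s)
    (fun s _ ↦ hasDerivAt_deriv_sphereWave hγ (fun s ↦ hasDerivAt_const s v) continuous_const s)
    (fun s _ ↦ by
      have bessel := sphereWave_bessel b ⟨0, hd⟩ s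
      rw [Fintype.card_fin] at bessel
      simp only [inner_zero_right, Complex.ofReal_zero, mul_zero, zero_sub, neg_mul, integral_neg]
      push_cast
      linear_combination bessel)
    (fun s _ ↦ norm_sphereWave_le (s • v))
  refine ⟨α, β, C, fun x hx ↦ ?_⟩
  have hxv : ‖x‖ = ‖‖x‖ • v‖ := by rw [norm_smul, norm_norm, b.norm_eq_one, mul_one]
  rw [sphereWave_eq_of_norm_eq hxv]
  exact h ‖x‖ (norm_pos_iff.2 hx)

end SphereWave

/-! ### Polar coordinates -/

section Polar

theorem integral_volumeIoiPow {F : Type*} [NormedAddCommGroup F] [NormedSpace ℝ F] (n : ℕ)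
    (f : ℝ → F) :
    ∫ r, f (r : ℝ) ∂(Measure.volumeIoiPow n) = ∫ r in Set.Ioi (0 : ℝ), r ^ n • f r := by
  have hm : Measurable fun r : Set.Ioi (0 : ℝ) ↦ ((r : ℝ) ^ n).toNNReal := by fun_prop
  simp only [Measure.volumeIoiPow, ENNReal.ofReal]
  rw [integral_withDensity_eq_integral_smul hm,
    integral_subtype_comap measurableSet_Ioi fun r : ℝ ↦ (r ^ n).toNNReal • f r]
  refine setIntegral_congr_fun measurableSet_Ioi fun r hr ↦ ?_
  simp only [NNReal.smul_def, Real.coe_toNNReal _ (pow_nonneg (Set.mem_Ioi.1 hr).le n)]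

theorem lintegral_volumeIoiPow (n : ℕ) {f : ℝ → ℝ≥0∞} (hf : Measurable f) :
    ∫⁻ r, f (r : ℝ) ∂(Measure.volumeIoiPow n) =
      ∫⁻ r in Set.Ioi (0 : ℝ), ENNReal.ofReal (r ^ n) * f r := by
  rw [Measure.volumeIoiPow, lintegral_withDensity_eq_lintegral_mul _ (by fun_prop) (by fun_prop)]
  exact lintegral_subtype_comap measurableSet_Ioi fun r : ℝ ↦ ENNReal.ofReal (r ^ n) * f r

variable {E : Type*} [NormedAddCommGroup E] [NormedSpace ℝ E] [FiniteDimensional ℝ E]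
  [MeasurableSpace E] [BorelSpace E] [Nontrivial E] (μ : Measure E) [μ.IsAddHaarMeasure]

theorem integral_eq_integral_Ioi_smul_integral_toSphere {F : Type*} [NormedAddCommGroup F]
    [NormedSpace ℝ F] {f : E → F} (hf : Integrable f μ) :
    ∫ x, f x ∂μ = ∫ r in Set.Ioi (0 : ℝ),
      r ^ (finrank ℝ E - 1) • ∫ ω : Metric.sphere (0 : E) 1, f (r • (ω : E)) ∂μ.toSphere := by
  have polar := μ.measurePreserving_homeomorphUnitSphereProd
  have emb := (homeomorphUnitSphereProd E).measurableEmbedding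
  have hsmul (x : ({0}ᶜ : Set E)) : ((homeomorphUnitSphereProd E x).2 : ℝ) •
      ((homeomorphUnitSphereProd E x).1 : E) = x := by
    simp [smul_smul, mul_inv_cancel₀ (norm_ne_zero_iff.2 x.2)]
  set P : Metric.sphere (0 : E) 1 × Set.Ioi (0 : ℝ) → F := fun p ↦ f ((p.2 : ℝ) • (p.1 : E))
  have hP : P ∘ homeomorphUnitSphereProd E = f ∘ Subtype.val := funext fun x ↦ congrArg f (hsmul x)
  have hint : Integrable P (μ.toSphere.prod (Measure.volumeIoiPow (finrank ℝ E - 1))) := by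
    rw [← polar.integrable_comp_emb emb, hP]
    exact (integrableOn_iff_comap_subtypeVal (measurableSet_singleton _).compl).1 hf.integrableOn
  calc ∫ x, f x ∂μ = ∫ x : ({0}ᶜ : Set E), f x ∂(μ.comap (↑)) := by
        rw [integral_subtype_comap (measurableSet_singleton _).compl f, restrict_compl_singleton]
    _ = ∫ p, P p ∂μ.toSphere.prod (Measure.volumeIoiPow (finrank ℝ E - 1)) := by
        rw [← polar.integral_comp emb]
        exact congrArg (integral _) hP.symm
    _ = _ := by
        rw [integral_prod_symm P hint]
        exact integral_volumeIoiPow _ fun r ↦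
          ∫ ω : Metric.sphere (0 : E) 1, f (r • (ω : E)) ∂μ.toSphere

theorem lintegral_fun_norm {f : ℝ → ℝ≥0∞} (hf : Measurable f) :
    ∫⁻ x, f ‖x‖ ∂μ = μ.toSphere Set.univ *
      ∫⁻ r in Set.Ioi (0 : ℝ), ENNReal.ofReal (r ^ (finrank ℝ E - 1)) * f r := by
  have polar := μ.measurePreserving_homeomorphUnitSphereProd
  calc ∫⁻ x, f ‖x‖ ∂μ = ∫⁻ x : ({0}ᶜ : Set E), f ‖(x : E)‖ ∂(μ.comap (↑)) := by
        rw [lintegral_subtype_comap (measurableSet_singleton _).compl fun x ↦ f ‖x‖,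
          restrict_compl_singleton]
    _ = ∫⁻ p, f p.2 ∂μ.toSphere.prod (Measure.volumeIoiPow (finrank ℝ E - 1)) := by
        rw [← polar.lintegral_comp (by fun_prop)]
        simp only [homeomorphUnitSphereProd_apply_snd_coe]
    _ = μ.toSphere Set.univ * ∫⁻ r, f (r : ℝ) ∂(Measure.volumeIoiPow (finrank ℝ E - 1)) := by
        rw [lintegral_prod _ (by fun_prop)]
        simp only [lintegral_const, mul_comm]
    _ = _ := by rw [lintegral_volumeIoiPow _ hf]

end Polar

/-! ### Perturbed one-dimensional oscillatory integrals -/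

theorem add_add_sq_le_four_mul (x y z : ℝ≥0∞) :
    (x + y + z) ^ 2 ≤ 4 * (x ^ 2 + y ^ 2 + z ^ 2) := by
  have add_sq_le (u v : ℝ≥0∞) : (u + v) ^ 2 ≤ 2 * (u ^ 2 + v ^ 2) := by
    have := ENNReal.rpow_add_le_mul_rpow_add_rpow u v one_le_two
    norm_num at this
    exact this
  calc (x + y + z) ^ 2 ≤ 2 * ((x + y) ^ 2 + z ^ 2) := add_sq_le _ _
    _ ≤ 2 * (2 * (x ^ 2 + y ^ 2) + 2 * z ^ 2) := by
        gcongr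
        · exact add_sq_le x y
        · exact le_mul_of_one_le_left' one_le_two
    _ = 4 * (x ^ 2 + y ^ 2 + z ^ 2) := by ring

theorem lintegral_sq_enorm_inv_one_add_mul_sq_le {ρ : ℝ} (hρ : 0 < ρ) :
    ∫⁻ η in Set.Ioi (0 : ℝ), ‖(1 + ρ * η ^ 2)⁻¹‖ₑ ^ 2 ≤
      ENNReal.ofReal π * ‖ρ‖ₑ ^ (-(1 / 2) : ℝ) := by
  have hint : Integrable fun η : ℝ ↦ (1 + ρ * η ^ 2)⁻¹ := by
    simpa only [mul_pow, Real.sq_sqrt hρ.le] using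
      integrable_inv_one_add_sq.comp_mul_left' (Real.sqrt_pos.2 hρ).ne'
  have hval : ∫ η : ℝ, (1 + ρ * η ^ 2)⁻¹ = π * ρ ^ (-(1 / 2) : ℝ) := by
    have scaled := Measure.integral_comp_mul_left (fun x : ℝ ↦ (1 + x ^ 2)⁻¹) √ρ
    simp only [mul_pow, Real.sq_sqrt hρ.le, integral_univ_inv_one_add_sq] at scaled
    rw [scaled, abs_of_nonneg (by positivity), Real.rpow_neg hρ.le, Real.sqrt_eq_rpow, smul_eq_mul,
      mul_comm]
  calc ∫⁻ η in Set.Ioi (0 : ℝ), ‖(1 + ρ * η ^ 2)⁻¹‖ₑ ^ 2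
      ≤ ∫⁻ η, ‖(1 + ρ * η ^ 2)⁻¹‖ₑ ^ 2 := setLIntegral_le_lintegral _ _
    _ ≤ ∫⁻ η, ‖(1 + ρ * η ^ 2)⁻¹‖ₑ := lintegral_mono fun η ↦ by
        have hle : (1 + ρ * η ^ 2)⁻¹ ≤ 1 := inv_le_one_of_one_le₀ (by nlinarith [sq_nonneg η])
        refine pow_le_of_le_one zero_le ?_ two_ne_zero
        rwa [Real.enorm_eq_ofReal (by positivity), ENNReal.ofReal_le_one]
    _ = ENNReal.ofReal (π * ρ ^ (-(1 / 2) : ℝ)) := by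
        rw [← hval, ofReal_integral_eq_lintegral_ofReal hint (.of_forall fun η ↦ by positivity)]
        exact lintegral_congr fun η ↦ Real.enorm_eq_ofReal (by positivity)
    _ = ENNReal.ofReal π * ‖ρ‖ₑ ^ (-(1 / 2) : ℝ) := by
        rw [ENNReal.ofReal_mul pi_pos.le, Real.enorm_eq_ofReal hρ.le, ENNReal.ofReal_rpow_of_pos hρ]

theorem oscFactor_eq_cexp_mul (b x t η : ℝ) :
    oscFactor b x t η = Complex.exp (Complex.I * (x * η ^ 2 : ℝ)) * oscFactor b 0 t η := by
  rw [oscFactor, oscFactor, ← Complex.exp_add]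
  push_cast
  ring_nf

section Perturbation

variable {φ G : ℝ → ℂ} {α β : ℂ} {b C ρ : ℝ}

theorem enorm_integral_mul_oscFactor_le (hb : 0 ≤ b) (hρ : 0 < ρ)
    (hφ : ∀ s : ℝ, 0 < s → ‖φ s - (α * Complex.exp (Complex.I * s) +
      β * Complex.exp (-Complex.I * s))‖ ≤ C / (1 + s))
    (hG : IntegrableOn G (Set.Ioi 0)) (t : ℝ) :
    ‖∫ η in Set.Ioi (0 : ℝ), φ (ρ * η ^ 2) * (oscFactor b 0 t η * G η)‖ₑ ≤
      ‖α‖ₑ * ‖oscInt b G ρ t‖ₑ + ‖β‖ₑ * ‖oscInt b G (-ρ) t‖ₑ +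
        ‖C‖ₑ * ∫⁻ η in Set.Ioi 0, ‖(1 + ρ * η ^ 2)⁻¹‖ₑ * ‖G η‖ₑ := by
  by_cases hint : IntegrableOn (fun η ↦ φ (ρ * η ^ 2) * (oscFactor b 0 t η * G η)) (Set.Ioi 0)
  swap
  · simp [integral_undef hint]
  have hplus := (integrableOn_oscFactor_mul hb hG ρ t).const_mul α
  have hminus := (integrableOn_oscFactor_mul hb hG (-ρ) t).const_mul β
  have hmain : IntegrableOn (fun η ↦ α * (oscFactor b ρ t η * G η) +
      β * (oscFactor b (-ρ) t η * G η)) (Set.Ioi 0) := hplus.add hminus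
  have hsplit : ∫ η in Set.Ioi (0 : ℝ), φ (ρ * η ^ 2) * (oscFactor b 0 t η * G η) =
      α * oscInt b G ρ t + β * oscInt b G (-ρ) t +
        ∫ η in Set.Ioi (0 : ℝ), (φ (ρ * η ^ 2) * (oscFactor b 0 t η * G η) -
          (α * (oscFactor b ρ t η * G η) + β * (oscFactor b (-ρ) t η * G η))) := by
    rw [integral_sub hint hmain, integral_add hplus hminus, integral_const_mul,
      integral_const_mul, oscInt, oscInt, add_sub_cancel]
  have hremainder (η : ℝ) : φ (ρ * η ^ 2) * (oscFactor b 0 t η * G η) -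
      (α * (oscFactor b ρ t η * G η) + β * (oscFactor b (-ρ) t η * G η)) =
      (φ (ρ * η ^ 2) - (α * Complex.exp (Complex.I * (ρ * η ^ 2 : ℝ)) +
        β * Complex.exp (-Complex.I * (ρ * η ^ 2 : ℝ)))) * (oscFactor b 0 t η * G η) := by
    rw [oscFactor_eq_cexp_mul b ρ, oscFactor_eq_cexp_mul b (-ρ)]
    push_cast
    ring_nf
  rw [hsplit]
  refine (enorm_add_le _ _).trans (add_le_add ((enorm_add_le _ _).trans_eq ?_)
    ((enorm_integral_le_lintegral_enorm _).trans ?_))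
  · rw [enorm_mul, enorm_mul]
  rw [← lintegral_const_mul' _ _ enorm_ne_top]
  refine setLIntegral_mono' measurableSet_Ioi fun η hη ↦ ?_
  simp only [hremainder, ← ofReal_norm, ← ENNReal.ofReal_mul (norm_nonneg _), norm_mul,
    norm_oscFactor, one_mul]
  rw [← mul_assoc, ← norm_mul C, ← div_eq_mul_inv]
  gcongr
  exact (hφ _ (mul_pos hρ (pow_pos hη 2))).trans (le_abs_self _)

/-- The majorant, at radius `ρ`, for the squared maximal function of an oscillatory integral with a
kernel asymptotic to `α e^{is} + β e^{-is}` up to an error `C / (1 + s)`. -/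
def oscMajorant (b : ℝ) (α β : ℂ) (C : ℝ) (G : ℝ → ℂ) (ρ : ℝ) : ℝ≥0∞ :=
  4 * (‖α‖ₑ ^ 2 * oscSup b G ρ + ‖β‖ₑ ^ 2 * oscSup b G (-ρ) +
    ‖C‖ₑ ^ 2 * (ENNReal.ofReal π * ‖ρ‖ₑ ^ (-(1 / 2) : ℝ) * ∫⁻ η in Set.Ioi 0, ‖G η‖ₑ ^ 2))

theorem iSup_enorm_sq_integral_mul_oscFactor_le (hb : 0 ≤ b) (hρ : 0 < ρ)
    (hφ : ∀ s : ℝ, 0 < s → ‖φ s - (α * Complex.exp (Complex.I * s) +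
      β * Complex.exp (-Complex.I * s))‖ ≤ C / (1 + s))
    (hG : IntegrableOn G (Set.Ioi 0)) :
    ⨆ t, ‖∫ η in Set.Ioi (0 : ℝ), φ (ρ * η ^ 2) * (oscFactor b 0 t η * G η)‖ₑ ^ 2 ≤
      oscMajorant b α β C G ρ := by
  have hremainder : (∫⁻ η in Set.Ioi 0, ‖(1 + ρ * η ^ 2)⁻¹‖ₑ * ‖G η‖ₑ) ^ 2 ≤
      ENNReal.ofReal π * ‖ρ‖ₑ ^ (-(1 / 2) : ℝ) * ∫⁻ η in Set.Ioi 0, ‖G η‖ₑ ^ 2 :=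
    (sq_lintegral_mul_le (Measurable.aemeasurable (by fun_prop)) hG.aemeasurable.enorm).trans
      (mul_le_mul_left (lintegral_sq_enorm_inv_one_add_mul_sq_le hρ) _)
  refine iSup_le fun t ↦ (pow_le_pow_left₀ zero_le
    (enorm_integral_mul_oscFactor_le hb hρ hφ hG t) 2).trans
    ((add_add_sq_le_four_mul _ _ _).trans ?_)
  simp only [mul_pow, oscMajorant]
  gcongr
  · exact le_iSup (fun t ↦ ‖oscInt b G ρ t‖ₑ ^ 2) t
  · exact le_iSup (fun t ↦ ‖oscInt b G (-ρ) t‖ₑ ^ 2) t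

theorem measurable_oscMajorant (hb : 0 ≤ b) (α β : ℂ) (C : ℝ) (hGm : Measurable G)
    (hG : IntegrableOn G (Set.Ioi 0)) : Measurable (oscMajorant b α β C G) := by
  have := measurable_oscSup hb hGm hG
  unfold oscMajorant
  fun_prop

theorem lintegral_ball_oscSup_neg (hb : 0 ≤ b) (hGm : Measurable G)
    (hG : IntegrableOn G (Set.Ioi 0)) :
    ∫⁻ r in Metric.ball 0 1, oscSup b G (-r) = ∫⁻ r in Metric.ball 0 1, oscSup b G r := by
  have := (Measure.measurePreserving_neg (volume : Measure ℝ)).setLIntegral_comp_preimage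
    (s := Metric.ball 0 1) measurableSet_ball (measurable_oscSup hb hGm hG)
  rwa [Set.neg_preimage, neg_ball, neg_zero] at this

theorem exists_lintegral_oscMajorant_le (hb : 2 < b) (α β : ℂ) (C : ℝ) :
    ∃ A : ℝ≥0∞, A ≠ ⊤ ∧ ∀ G : ℝ → ℂ, Measurable G → IntegrableOn G (Set.Ioi 0) →
      ∫⁻ r in Metric.ball 0 1, oscMajorant b α β C G r ≤ A * ∫⁻ η in Set.Ioi 0, ‖G η‖ₑ ^ 2 := by
  have hb0 : 0 ≤ b := by linarith
  obtain ⟨A, hA, maximal⟩ := exists_lintegral_oscSup_le hb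
  set P := ∫⁻ r : ℝ in Metric.ball 0 1, ‖r‖ₑ ^ (-(1 / 2) : ℝ)
  have hP : P ≠ ⊤ := (lintegral_enorm_rpow_lt_top (by norm_num) _).ne
  refine ⟨4 * (‖α‖ₑ ^ 2 * A + ‖β‖ₑ ^ 2 * A + ‖C‖ₑ ^ 2 * (ENNReal.ofReal π * P)), by finiteness,
    fun G hGm hG ↦ ?_⟩
  have hS := measurable_oscSup hb0 hGm hG
  set N := ∫⁻ η in Set.Ioi 0, ‖G η‖ₑ ^ 2
  calc ∫⁻ r in Metric.ball 0 1, oscMajorant b α β C G r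
      = 4 * (‖α‖ₑ ^ 2 * (∫⁻ r in Metric.ball 0 1, oscSup b G r) +
          ‖β‖ₑ ^ 2 * (∫⁻ r in Metric.ball 0 1, oscSup b G (-r)) +
            ‖C‖ₑ ^ 2 * (ENNReal.ofReal π * P * N)) := by
        unfold oscMajorant
        rw [lintegral_const_mul _ (by fun_prop), lintegral_add_left (by fun_prop),
          lintegral_add_left (by fun_prop), lintegral_const_mul _ hS,
          lintegral_const_mul _ (by fun_prop), lintegral_const_mul _ (by fun_prop),
          lintegral_mul_const _ (by fun_prop), lintegral_const_mul _ (by fun_prop)]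
    _ ≤ 4 * (‖α‖ₑ ^ 2 * (A * N) + ‖β‖ₑ ^ 2 * (A * N) +
          ‖C‖ₑ ^ 2 * (ENNReal.ofReal π * P * N)) := by
        rw [lintegral_ball_oscSup_neg hb0 hGm hG]
        gcongr <;> exact maximal G hGm hG
    _ = _ := by ring

end Perturbation

/-! ### Radial oscillatory integrals -/

/-- The amplitude of the one-dimensional integral obtained from a radial function with profile `g`
on a space of dimension `d`, after passing to polar coordinates and substituting `r = η ^ 2`. -/
def radialAmp (d : ℕ) (g : ℝ → ℂ) (η : ℝ) : ℂ := (2 * η ^ d : ℝ) * g (η ^ 2)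

theorem measurable_radialAmp (d : ℕ) {g : ℝ → ℂ} (hg : Measurable g) :
    Measurable (radialAmp d g) := by
  unfold radialAmp
  fun_prop

theorem lintegral_Ioi_comp_sq (f : ℝ → ℝ≥0∞) :
    ∫⁻ η in Set.Ioi (0 : ℝ), ENNReal.ofReal (2 * η) * f (η ^ 2) = ∫⁻ r in Set.Ioi (0 : ℝ), f r := by
  have image_sq : (fun η : ℝ ↦ η ^ 2) '' Set.Ioi 0 = Set.Ioi 0 := by
    ext r
    constructor
    · rintro ⟨η, hη, rfl⟩
      exact pow_pos (Set.mem_Ioi.1 hη) 2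
    · exact fun hr ↦ ⟨√r, Real.sqrt_pos.2 hr, Real.sq_sqrt (Set.mem_Ioi.1 hr).le⟩
  have change_of_variables := lintegral_image_eq_lintegral_deriv_mul_of_monotoneOn measurableSet_Ioi
    (fun η _ ↦ (hasDerivAt_pow 2 η).hasDerivWithinAt)
    (fun x hx y _ hxy ↦ pow_le_pow_left₀ (Set.mem_Ioi.1 hx).le hxy 2) f
  rw [image_sq] at change_of_variables
  simpa using change_of_variables.symm

section Radial

variable {E : Type*} [NormedAddCommGroup E] [InnerProductSpace ℝ E] [FiniteDimensional ℝ E]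
  [MeasurableSpace E] [BorelSpace E]

/-- The oscillatory integral `∫ e^{i(x·ξ + t|ξ|^a)} h(ξ) dξ` with amplitude `h`. -/
def osc (a : ℝ) (h : E → ℂ) (x : E) (t : ℝ) : ℂ :=
  ∫ ξ, Complex.exp (Complex.I * (⟪x, ξ⟫_ℝ + t * ‖ξ‖ ^ a : ℝ)) * h ξ

variable [Nontrivial E]

theorem toSphere_mul_lintegral_enorm_sq_radialAmp {g : ℝ → ℂ} (hg : Measurable g) :
    (volume : Measure E).toSphere Set.univ *
      ∫⁻ η in Set.Ioi 0, ‖radialAmp (finrank ℝ E) g η‖ₑ ^ 2 =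
      2 * ∫⁻ ξ : E, ‖ξ‖ₑ ^ (1 / 2 : ℝ) * ‖g ‖ξ‖‖ₑ ^ 2 := by
  simp_rw [← enorm_norm (_ : E)]
  rw [lintegral_fun_norm volume (f := fun r ↦ ‖r‖ₑ ^ (1 / 2 : ℝ) * ‖g r‖ₑ ^ 2) (by fun_prop),
    ← lintegral_Ioi_comp_sq fun r ↦ ENNReal.ofReal (r ^ (finrank ℝ E - 1)) * _, mul_left_comm,
    ← lintegral_const_mul' _ _ ENNReal.ofNat_ne_top]
  congr 1
  refine setLIntegral_congr_fun measurableSet_Ioi fun η hη ↦ ?_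
  have hη : 0 < η := hη
  obtain ⟨l, hl⟩ : ∃ l, finrank ℝ E = l + 1 := Nat.exists_eq_succ_of_ne_zero Module.finrank_pos.ne'
  have weight : ‖η ^ 2‖ₑ ^ (1 / 2 : ℝ) = ‖η‖ₑ := by
    rw [enorm_pow, ← ENNReal.rpow_natCast, ← ENNReal.rpow_mul]
    norm_num
  have jacobian : ENNReal.ofReal (2 * η) = 2 * ‖η‖ₑ := by
    rw [ENNReal.ofReal_mul zero_le_two, ENNReal.ofReal_ofNat, enorm_of_nonneg hη.le]
  have density : ENNReal.ofReal ((η ^ 2) ^ l) = ‖η‖ₑ ^ (2 * l) := by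
    rw [← pow_mul, ENNReal.ofReal_pow hη.le, enorm_of_nonneg hη.le]
  have amplitude : ‖((2 * η ^ (l + 1) : ℝ) : ℂ)‖ₑ = 2 * ‖η‖ₑ ^ (l + 1) := by
    rw [← ofReal_norm, Complex.norm_real, Real.norm_of_nonneg (by positivity),
      ENNReal.ofReal_mul zero_le_two, ENNReal.ofReal_pow hη.le, ENNReal.ofReal_ofNat,
      enorm_of_nonneg hη.le]
  rw [radialAmp, enorm_mul, hl, Nat.add_sub_cancel, weight, jacobian, density, amplitude]
  ring

theorem integrableOn_radialAmp {g : ℝ → ℂ} (hg : Measurable g)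
    (hgi : Integrable fun ξ : E ↦ g ‖ξ‖)
    (hg2 : ∫⁻ η in Set.Ioi 0, ‖radialAmp (finrank ℝ E) g η‖ₑ ^ 2 < ⊤) :
    IntegrableOn (radialAmp (finrank ℝ E) g) (Set.Ioi 0) := by
  have hm := measurable_radialAmp (finrank ℝ E) hg
  have near_zero : IntegrableOn (radialAmp (finrank ℝ E) g) (Set.Ioc 0 1) := by
    have : MemLp (radialAmp (finrank ℝ E) g) 2 (volume.restrict (Set.Ioc 0 1)) := by
      refine ⟨hm.aestronglyMeasurable, ?_⟩
      rw [eLpNorm_lt_top_iff_lintegral_rpow_enorm_lt_top two_ne_zero ENNReal.ofNat_ne_top]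
      simpa using (lintegral_mono_set Set.Ioc_subset_Ioi_self).trans_lt hg2
    exact this.integrable one_le_two
  have polar := (integrableOn_Ioi_comp_rpow_iff _ two_ne_zero).2
    ((integrable_fun_norm_addHaar volume).1 hgi)
  have near_infinity : IntegrableOn (radialAmp (finrank ℝ E) g) (Set.Ioi 1) := by
    refine Integrable.mono (polar.mono_set (Set.Ioi_subset_Ioi zero_le_one))
      hm.aestronglyMeasurable ?_
    filter_upwards [ae_restrict_mem measurableSet_Ioi] with η hη
    have hη : 1 < η := hη
    have hd : 1 ≤ finrank ℝ E := Module.finrank_pos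
    have weight : η ^ finrank ℝ E ≤ η * (η ^ 2) ^ (finrank ℝ E - 1) := by
      rw [← pow_mul, ← pow_succ']
      exact pow_le_pow_right₀ hη.le (by omega)
    calc ‖radialAmp (finrank ℝ E) g η‖ = 2 * η ^ finrank ℝ E * ‖g (η ^ 2)‖ := by
          rw [radialAmp, norm_mul, Complex.norm_real, Real.norm_of_nonneg (by positivity)]
      _ ≤ 2 * (η * (η ^ 2) ^ (finrank ℝ E - 1)) * ‖g (η ^ 2)‖ := by gcongr
      _ = _ := by
          have jacobian : (2 : ℝ) * η ^ ((2 : ℝ) - 1) = 2 * η := by norm_num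
          simp only [norm_smul, Real.rpow_two, abs_two, jacobian, norm_mul, norm_pow,
            Real.norm_of_nonneg (zero_le_one.trans hη.le), Real.norm_ofNat]
          ring
  rw [← Set.Ioc_union_Ioi_eq_Ioi zero_le_one]
  exact near_zero.union near_infinity

theorem integral_cexp_inner_mul_fun_norm {F : ℝ → ℂ} (hF : Integrable fun ξ : E ↦ F ‖ξ‖) {e : E}
    (he : ‖e‖ = 1) (x : E) :
    ∫ ξ, Complex.exp (Complex.I * (⟪x, ξ⟫_ℝ : ℝ)) * F ‖ξ‖ = ∫ r in Set.Ioi (0 : ℝ),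
      r ^ (finrank ℝ E - 1) • (sphereWave ((‖x‖ * r) • e) * F r) := by
  have hint : Integrable fun ξ ↦ Complex.exp (Complex.I * (⟪x, ξ⟫_ℝ : ℝ)) * F ‖ξ‖ :=
    hF.bdd_mul (c := 1) (Continuous.aestronglyMeasurable (by fun_prop))
      (.of_forall fun ξ ↦ (Complex.norm_exp_I_mul_ofReal _).le)
  rw [integral_eq_integral_Ioi_smul_integral_toSphere volume hint]
  refine setIntegral_congr_fun measurableSet_Ioi fun r hr ↦ ?_
  have hr : 0 < r := hr
  have hnorm (ω : Metric.sphere (0 : E) 1) : ‖r • (ω : E)‖ = r := by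
    rw [norm_smul, norm_eq_of_mem_sphere, mul_one, Real.norm_of_nonneg hr.le]
  have hwave : sphereWave ((‖x‖ * r) • e) = sphereWave (r • x) := by
    refine sphereWave_eq_of_norm_eq ?_
    rw [norm_smul, norm_smul, he, mul_one, norm_mul, norm_norm, mul_comm]
  rw [hwave]
  simp only [hnorm, integral_mul_const, sphereWave, inner_smul_right, real_inner_comm]

theorem rpow_mul_osc_fun_norm (a : ℝ) {g : ℝ → ℂ} (hg : Integrable fun ξ : E ↦ g ‖ξ‖) {e : E}
    (he : ‖e‖ = 1) (x : E) (t : ℝ) :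
    (‖x‖ ^ ((finrank ℝ E - 1 : ℝ) / 2) : ℝ) * osc a (fun ξ ↦ g ‖ξ‖) x t =
      ∫ η in Set.Ioi (0 : ℝ), ((‖x‖ * η ^ 2) ^ ((finrank ℝ E - 1 : ℝ) / 2) : ℝ) *
        sphereWave ((‖x‖ * η ^ 2) • e) *
          (oscFactor (2 * a) 0 t η * radialAmp (finrank ℝ E) g η) := by
  have hF : Integrable fun ξ : E ↦ Complex.exp (Complex.I * (t * ‖ξ‖ ^ a : ℝ)) * g ‖ξ‖ :=
    hg.bdd_mul (c := 1) (Measurable.aestronglyMeasurable (by fun_prop))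
      (.of_forall fun ξ ↦ (Complex.norm_exp_I_mul_ofReal _).le)
  have hosc : osc a (fun ξ ↦ g ‖ξ‖) x t = ∫ ξ, Complex.exp (Complex.I * (⟪x, ξ⟫_ℝ : ℝ)) *
      (Complex.exp (Complex.I * (t * ‖ξ‖ ^ a : ℝ)) * g ‖ξ‖) := by
    refine integral_congr_ae (.of_forall fun ξ ↦ ?_)
    simp only [Complex.ofReal_add, mul_add, Complex.exp_add, mul_assoc]
  rw [hosc, integral_cexp_inner_mul_fun_norm
    (F := fun r ↦ Complex.exp (Complex.I * (t * r ^ a : ℝ)) * g r) hF he,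
    ← integral_comp_rpow_Ioi_of_pos two_pos, ← integral_const_mul]
  refine setIntegral_congr_fun measurableSet_Ioi fun η hη ↦ ?_
  have hη : 0 < η := hη
  obtain ⟨l, hl⟩ : ∃ l, finrank ℝ E = l + 1 := Nat.exists_eq_succ_of_ne_zero Module.finrank_pos.ne'
  have weight : (‖x‖ * η ^ 2) ^ ((finrank ℝ E - 1 : ℝ) / 2) =
      ‖x‖ ^ ((finrank ℝ E - 1 : ℝ) / 2) * η ^ l := by
    rw [Real.mul_rpow (norm_nonneg x) (by positivity), ← Real.rpow_natCast η 2,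
      ← Real.rpow_mul hη.le, ← Real.rpow_natCast η l, hl]
    congr 2
    push_cast
    ring
  have phase : t * (η ^ 2) ^ a = 0 * η ^ 2 + t * η ^ (2 * a) := by
    rw [zero_mul, zero_add, Real.rpow_mul hη.le, Real.rpow_two]
  rw [weight]
  simp only [Real.rpow_two, phase, oscFactor, radialAmp, hl, Nat.add_sub_cancel,
    Complex.real_smul]
  norm_num
  ring

theorem lintegral_ball_inv_mul_fun_norm_le {K : ℝ → ℝ≥0∞} (hK : Measurable K) :
    ∫⁻ x in Metric.ball (0 : E) 1, (‖x‖ₑ ^ (finrank ℝ E - 1))⁻¹ * K ‖x‖ ≤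
      (volume : Measure E).toSphere Set.univ * ∫⁻ r in Metric.ball (0 : ℝ) 1, K r := by
  set f : ℝ → ℝ≥0∞ := (Metric.ball 0 1).indicator fun r ↦ (‖r‖ₑ ^ (finrank ℝ E - 1))⁻¹ * K r
  have hf : Measurable f := (by fun_prop : Measurable _).indicator measurableSet_ball
  have radial (x : E) : (Metric.ball (0 : E) 1).indicator
      (fun x ↦ (‖x‖ₑ ^ (finrank ℝ E - 1))⁻¹ * K ‖x‖) x = f ‖x‖ := by
    simp only [f, Set.indicator, mem_ball_zero_iff, norm_norm, enorm_norm]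
  rw [← lintegral_indicator measurableSet_ball, lintegral_congr radial, lintegral_fun_norm _ hf,
    ← lintegral_indicator measurableSet_ball]
  refine mul_le_mul_right ((setLIntegral_mono' measurableSet_Ioi fun r hr ↦ ?_).trans
    (setLIntegral_le_lintegral _ _)) _
  have hr : 0 < r := hr
  by_cases hball : r ∈ Metric.ball 0 1
  · have hne : ‖r‖ₑ ^ (finrank ℝ E - 1) ≠ 0 := by simp [hr.ne']
    simp only [f, Set.indicator_of_mem hball]
    rw [ENNReal.ofReal_pow hr.le, ← enorm_of_nonneg hr.le,
      ENNReal.mul_inv_cancel_left hne (by finiteness)]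
  · simp [f, hball]

theorem iSup_enorm_sq_osc_fun_norm_le {a : ℝ} (ha : 0 ≤ a) {α β : ℂ} {C : ℝ}
    (asymptotics : ∀ x : E, x ≠ 0 →
      ‖((‖x‖ ^ ((finrank ℝ E - 1 : ℝ) / 2) : ℝ) : ℂ) * sphereWave x -
        (α * Complex.exp (Complex.I * ‖x‖) + β * Complex.exp (-Complex.I * ‖x‖))‖ ≤
          C / (1 + ‖x‖))
    {g : ℝ → ℂ} (hg : Integrable fun ξ : E ↦ g ‖ξ‖)
    (hG : IntegrableOn (radialAmp (finrank ℝ E) g) (Set.Ioi 0)) {x : E} (hx : x ≠ 0) :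
    ⨆ t, ‖osc a (fun ξ ↦ g ‖ξ‖) x t‖ₑ ^ 2 ≤ (‖x‖ₑ ^ (finrank ℝ E - 1))⁻¹ *
      oscMajorant (2 * a) α β C (radialAmp (finrank ℝ E) g) ‖x‖ := by
  have he : ‖‖x‖⁻¹ • x‖ = 1 := by
    simpa using norm_smul_inv_norm (𝕜 := ℝ) hx
  have hφ (s : ℝ) (hs : 0 < s) :
      ‖((s ^ ((finrank ℝ E - 1 : ℝ) / 2) : ℝ) : ℂ) * sphereWave (s • ‖x‖⁻¹ • x) -
        (α * Complex.exp (Complex.I * s) + β * Complex.exp (-Complex.I * s))‖ ≤ C / (1 + s) := by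
    have norm_eq : ‖s • ‖x‖⁻¹ • x‖ = s := by
      rw [norm_smul, he, mul_one, Real.norm_of_nonneg hs.le]
    have := asymptotics (s • ‖x‖⁻¹ • x) (norm_pos_iff.1 (norm_eq.symm ▸ hs))
    rwa [norm_eq] at this
  have weight (t : ℝ) : ‖x‖ₑ ^ (finrank ℝ E - 1) * ‖osc a (fun ξ ↦ g ‖ξ‖) x t‖ₑ ^ 2 =
      ‖((‖x‖ ^ ((finrank ℝ E - 1 : ℝ) / 2) : ℝ) : ℂ) * osc a (fun ξ ↦ g ‖ξ‖) x t‖ₑ ^ 2 := by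
    have hd : 1 ≤ finrank ℝ E := Module.finrank_pos
    have sq_rpow : (‖x‖ ^ ((finrank ℝ E - 1 : ℝ) / 2)) ^ 2 = ‖x‖ ^ (finrank ℝ E - 1) := by
      rw [← Real.rpow_natCast, ← Real.rpow_mul (norm_nonneg x), ← Real.rpow_natCast,
        Nat.cast_sub hd]
      norm_num
    rw [enorm_mul, mul_pow, ← ofReal_norm (Complex.ofReal _), Complex.norm_real, ofReal_norm,
      ← enorm_pow (_ : ℝ), sq_rpow, enorm_pow, enorm_norm]
  have hne : ‖x‖ₑ ^ (finrank ℝ E - 1) ≠ 0 := by simp [hx]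
  rw [← ENNReal.mul_le_iff_le_inv hne (by finiteness), ENNReal.mul_iSup]
  simp only [weight, rpow_mul_osc_fun_norm a hg he]
  exact iSup_enorm_sq_integral_mul_oscFactor_le
    (φ := fun s ↦ ((s ^ ((finrank ℝ E - 1 : ℝ) / 2) : ℝ) : ℂ) * sphereWave (s • ‖x‖⁻¹ • x))
    (by positivity) (norm_pos_iff.2 hx) hφ hG

theorem exists_lintegral_iSup_osc_fun_norm_le {a : ℝ} (ha : 1 < a) :
    ∃ A : ℝ≥0∞, A ≠ ⊤ ∧ ∀ g : ℝ → ℂ, Measurable g → Integrable (fun ξ : E ↦ g ‖ξ‖) →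
      ∫⁻ x in Metric.ball (0 : E) 1, ⨆ t, ‖osc a (fun ξ ↦ g ‖ξ‖) x t‖ₑ ^ 2 ≤
        A * ∫⁻ ξ : E, ‖ξ‖ₑ ^ (1 / 2 : ℝ) * ‖g ‖ξ‖‖ₑ ^ 2 := by
  obtain ⟨α, β, C, asymptotics⟩ := exists_asymptotics_sphereWave (E := E)
  obtain ⟨A, hA, maximal⟩ := exists_lintegral_oscMajorant_le (b := 2 * a) (by linarith) α β C
  refine ⟨A * 2 + 1, by finiteness, fun g hg hgi ↦ ?_⟩
  set J := ∫⁻ ξ : E, ‖ξ‖ₑ ^ (1 / 2 : ℝ) * ‖g ‖ξ‖‖ₑ ^ 2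
  rcases eq_or_ne J ⊤ with hJ | hJ
  · simp [hJ]
  set σ := (volume : Measure E).toSphere Set.univ
  set G := radialAmp (finrank ℝ E) g
  have norm_eq : σ * ∫⁻ η in Set.Ioi 0, ‖G η‖ₑ ^ 2 = 2 * J :=
    toSphere_mul_lintegral_enorm_sq_radialAmp hg
  have hσ : σ ≠ 0 := Measure.measure_univ_ne_zero.2 volume.toSphere_ne_zero
  have hGm : Measurable G := measurable_radialAmp _ hg
  have hGi : IntegrableOn G (Set.Ioi 0) := integrableOn_radialAmp hg hgi
    (ENNReal.lt_top_of_mul_ne_top_right (norm_eq.trans_ne (by finiteness)) hσ)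
  have pointwise : ∀ᵐ x ∂volume.restrict (Metric.ball (0 : E) 1),
      ⨆ t, ‖osc a (fun ξ ↦ g ‖ξ‖) x t‖ₑ ^ 2 ≤
        (‖x‖ₑ ^ (finrank ℝ E - 1))⁻¹ * oscMajorant (2 * a) α β C G ‖x‖ := by
    filter_upwards [ae_restrict_of_ae (Measure.ae_ne volume 0)] with x hx
    exact iSup_enorm_sq_osc_fun_norm_le (by linarith) asymptotics hgi hGi hx
  calc ∫⁻ x in Metric.ball (0 : E) 1, ⨆ t, ‖osc a (fun ξ ↦ g ‖ξ‖) x t‖ₑ ^ 2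
      ≤ ∫⁻ x in Metric.ball (0 : E) 1, (‖x‖ₑ ^ (finrank ℝ E - 1))⁻¹ *
          oscMajorant (2 * a) α β C G ‖x‖ := lintegral_mono_ae pointwise
    _ ≤ σ * ∫⁻ r in Metric.ball (0 : ℝ) 1, oscMajorant (2 * a) α β C G r :=
        lintegral_ball_inv_mul_fun_norm_le (measurable_oscMajorant (by linarith) α β C hGm hGi)
    _ ≤ σ * (A * ∫⁻ η in Set.Ioi 0, ‖G η‖ₑ ^ 2) := by
        gcongr
        exact maximal G hGm hGi
    _ = A * 2 * J := by rw [mul_left_comm, norm_eq, mul_assoc]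
    _ ≤ (A * 2 + 1) * J := by gcongr; exact le_self_add

end Radial

/-! ### Schwartz functions and Sobolev norms -/

theorem enorm_iSup_norm_sq_le {ι F : Type*} [SeminormedAddCommGroup F] (u : ι → F) :
    ‖⨆ i, ‖u i‖‖ₑ ^ 2 ≤ ⨆ i, ‖u i‖ₑ ^ 2 := by
  rcases eq_or_ne (⨆ i, ‖u i‖ₑ ^ 2) ⊤ with h | h
  · exact h ▸ le_top
  have norm_le (i : ι) : ‖u i‖ ≤ √(⨆ i, ‖u i‖ₑ ^ 2).toReal := by
    refine Real.le_sqrt_of_sq_le ?_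
    have := ENNReal.toReal_mono h (le_iSup (fun i ↦ ‖u i‖ₑ ^ 2) i)
    rwa [ENNReal.toReal_pow, toReal_enorm] at this
  rw [enorm_of_nonneg (Real.iSup_nonneg fun i ↦ norm_nonneg _),
    ← ENNReal.ofReal_pow (Real.iSup_nonneg fun i ↦ norm_nonneg _)]
  refine ENNReal.ofReal_le_of_le_toReal ?_
  rw [← Real.sq_sqrt ENNReal.toReal_nonneg]
  exact pow_le_pow_left₀ (Real.iSup_nonneg fun i ↦ norm_nonneg _)
    (Real.iSup_le norm_le (Real.sqrt_nonneg _)) 2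

theorem integral_sq_iSup_norm_le {X ι F : Type*} [MeasurableSpace X] {μ : Measure X}
    [SeminormedAddCommGroup F] {u : X → ι → F} {B : ℝ} (hB : 0 ≤ B)
    (h : ∫⁻ x, ⨆ i, ‖u x i‖ₑ ^ 2 ∂μ ≤ ENNReal.ofReal B) :
    ∫ x, (⨆ i, ‖u x i‖) ^ 2 ∂μ ≤ B := by
  refine (le_abs_self _).trans ((ENNReal.ofReal_le_ofReal_iff hB).1 ?_)
  rw [← Real.norm_eq_abs, ofReal_norm]
  refine (enorm_integral_le_lintegral_enorm _).trans ((lintegral_mono fun x ↦ ?_).trans h)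
  rw [enorm_pow]
  exact enorm_iSup_norm_sq_le (u x)

theorem norm_rpow_two_mul_le {E : Type*} [SeminormedAddCommGroup E] {s : ℝ} (hs : 0 ≤ s) (ξ : E) :
    ‖ξ‖ ^ (2 * s) ≤ (1 + ‖ξ‖ ^ 2) ^ s := by
  rw [Real.rpow_mul (norm_nonneg ξ), Real.rpow_two]
  gcongr
  linarith

section Schwartz

variable {E : Type*} [NormedAddCommGroup E] [InnerProductSpace ℝ E] [FiniteDimensional ℝ E]
  [MeasurableSpace E] [BorelSpace E]

theorem integrable_one_add_norm_sq_rpow_mul_norm_sq (s : ℝ) (h : SchwartzMap E ℂ) :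
    Integrable fun ξ ↦ (1 + ‖ξ‖ ^ 2) ^ s * ‖h ξ‖ ^ 2 := by
  have hw : Function.HasTemperateGrowth fun ξ : E ↦ (1 + ‖ξ‖ ^ 2) ^ (s / 2) := by fun_prop
  have hL2 := (SchwartzMap.smulLeftCLM ℂ (fun ξ : E ↦ (1 + ‖ξ‖ ^ 2) ^ (s / 2)) h).memLp 2 volume
  refine ((memLp_two_iff_integrable_sq_norm hL2.1).1 hL2).congr (.of_forall fun ξ ↦ ?_)
  have hpos : 0 < 1 + ‖ξ‖ ^ 2 := zero_lt_one_add_norm_sq ξ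
  simp only [SchwartzMap.smulLeftCLM_apply_apply hw, norm_smul, mul_pow]
  rw [Real.norm_of_nonneg (by positivity), ← Real.rpow_natCast, ← Real.rpow_mul hpos.le]
  norm_num

theorem integrable_norm_rpow_mul_norm_sq {s : ℝ} (hs : 0 ≤ s) (h : SchwartzMap E ℂ) :
    Integrable fun ξ ↦ ‖ξ‖ ^ (2 * s) * ‖h ξ‖ ^ 2 := by
  refine (integrable_one_add_norm_sq_rpow_mul_norm_sq s h).mono'
    (Measurable.aestronglyMeasurable (by have := h.continuous.measurable; fun_prop))
    (.of_forall fun ξ ↦ ?_)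
  rw [Real.norm_of_nonneg (by positivity)]
  gcongr
  exact norm_rpow_two_mul_le hs ξ

theorem integral_norm_rpow_mul_norm_sq_le {s : ℝ} (hs : 0 ≤ s) (h : SchwartzMap E ℂ) :
    ∫ ξ, ‖ξ‖ ^ (2 * s) * ‖h ξ‖ ^ 2 ≤ ∫ ξ, (1 + ‖ξ‖ ^ 2) ^ s * ‖h ξ‖ ^ 2 :=
  integral_mono (integrable_norm_rpow_mul_norm_sq hs h)
    (integrable_one_add_norm_sq_rpow_mul_norm_sq s h)
    fun ξ ↦ mul_le_mul_of_nonneg_right (norm_rpow_two_mul_le hs ξ) (sq_nonneg _)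

theorem exists_integral_sq_iSup_osc_le [Nontrivial E] {a : ℝ} (ha : 1 < a) :
    ∃ C > 0, ∀ (T : Set ℝ) (h : SchwartzMap E ℂ), (∀ ξ η, ‖ξ‖ = ‖η‖ → h ξ = h η) →
      ∫ x in Metric.ball (0 : E) 1, (⨆ t : T, ‖osc a h x t‖) ^ 2 ≤
        C * ∫ ξ, ‖ξ‖ ^ (1 / 2 : ℝ) * ‖h ξ‖ ^ 2 := by
  obtain ⟨A, hA, maximal⟩ := exists_lintegral_iSup_osc_fun_norm_le (E := E) ha
  obtain ⟨e, he⟩ := exists_norm_eq E zero_le_one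
  refine ⟨A.toReal + 1, by positivity, fun T h radial ↦ ?_⟩
  have profile (ξ : E) : h (‖ξ‖ • e) = h ξ :=
    radial _ _ (by rw [norm_smul, norm_norm, he, mul_one])
  have hJ : Integrable fun ξ ↦ ‖ξ‖ ^ (1 / 2 : ℝ) * ‖h ξ‖ ^ 2 := by
    have := integrable_norm_rpow_mul_norm_sq (s := 1 / 4) (by norm_num) h
    norm_num at this ⊢
    exact this
  have hJ0 : 0 ≤ ∫ ξ, ‖ξ‖ ^ (1 / 2 : ℝ) * ‖h ξ‖ ^ 2 := integral_nonneg fun ξ ↦ by positivity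
  refine integral_sq_iSup_norm_le (by positivity) ?_
  calc ∫⁻ x in Metric.ball (0 : E) 1, ⨆ t : T, ‖osc a h x t‖ₑ ^ 2
      ≤ ∫⁻ x in Metric.ball (0 : E) 1, ⨆ t, ‖osc a h x t‖ₑ ^ 2 := by
        gcongr with x
        exact iSup_le fun t : T ↦ le_iSup (fun t ↦ ‖osc a h x t‖ₑ ^ 2) t
    _ ≤ A * ∫⁻ ξ, ‖ξ‖ₑ ^ (1 / 2 : ℝ) * ‖h ξ‖ₑ ^ 2 := by
        simpa only [profile] using maximal (fun r ↦ h (r • e))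
          (h.continuous.comp (by fun_prop)).measurable (by simpa only [profile] using h.integrable)
    _ = ENNReal.ofReal (A.toReal * ∫ ξ, ‖ξ‖ ^ (1 / 2 : ℝ) * ‖h ξ‖ ^ 2) := by
        rw [ENNReal.ofReal_mul ENNReal.toReal_nonneg, ENNReal.ofReal_toReal hA,
          ofReal_integral_eq_lintegral_ofReal hJ (.of_forall fun ξ ↦ by positivity)]
        refine congrArg (A * ·) (lintegral_congr fun ξ ↦ ?_)
        rw [ENNReal.ofReal_mul (by positivity), ENNReal.ofReal_pow (norm_nonneg _), ofReal_norm,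
          ← ENNReal.ofReal_rpow_of_nonneg (norm_nonneg _) (by norm_num), ofReal_norm]
    _ ≤ _ := ENNReal.ofReal_le_ofReal (mul_le_mul_of_nonneg_right (by linarith) hJ0)

end Schwartz

/-! ### The Fourier transform of a radial function -/

theorem FT_eq_fourier (n : ℕ) (f : EuclideanSpace ℝ (Fin n) → ℂ) (ξ : EuclideanSpace ℝ (Fin n)) :
    FT n f ξ = FourierTransform.fourier f ((2 * π)⁻¹ • ξ) := by
  rw [Real.fourier_eq, FT]
  refine integral_congr_ae (.of_forall fun x ↦ ?_)
  have phase : 2 * π * -((2 * π)⁻¹ * ⟪x, ξ⟫_ℝ) = -⟪x, ξ⟫_ℝ := by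
    field_simp
  simp only [Circle.smul_def, Real.fourierChar_apply, smul_eq_mul, real_inner_smul_right, phase]
  push_cast
  ring_nf

theorem FT_eq_of_norm_eq {n : ℕ} {f : EuclideanSpace ℝ (Fin n) → ℂ}
    (radial : ∀ x y, ‖x‖ = ‖y‖ → f x = f y) {ξ η : EuclideanSpace ℝ (Fin n)} (h : ‖ξ‖ = ‖η‖) :
    FT n f ξ = FT n f η := by
  set L := (ℝ ∙ (ξ - η))ᗮ.reflection
  have f_comp : f ∘ L = f := funext fun x ↦ radial _ _ (L.norm_map x)
  rw [FT_eq_fourier, FT_eq_fourier, ← Submodule.reflection_sub h, ← L.map_smul,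
    ← Real.fourier_comp_linearIsometry, f_comp]

theorem exists_schwartzMap_eq_FT {n : ℕ} (f : SchwartzMap (EuclideanSpace ℝ (Fin n)) ℂ) :
    ∃ h : SchwartzMap (EuclideanSpace ℝ (Fin n)) ℂ, ⇑h = FT n f := by
  have hπ : (2 * π)⁻¹ ≠ 0 := by positivity
  refine ⟨SchwartzMap.compCLMOfContinuousLinearEquiv ℂ
    (ContinuousLinearEquiv.smulLeft (Units.mk0 (2 * π)⁻¹ hπ)) (FourierTransform.fourier f), ?_⟩
  ext ξ
  rw [FT_eq_fourier, SchwartzMap.compCLMOfContinuousLinearEquiv_apply, SchwartzMap.fourier_coe]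
  rfl

theorem integral_norm_rpow_mul_norm_FT_sq_le {n : ℕ} {s : ℝ} (hs : 0 ≤ s)
    (f : SchwartzMap (EuclideanSpace ℝ (Fin n)) ℂ) :
    ∫ ξ, ‖ξ‖ ^ (2 * s) * ‖FT n f ξ‖ ^ 2 ≤ ∫ ξ, (1 + ‖ξ‖ ^ 2) ^ s * ‖FT n f ξ‖ ^ 2 := by
  obtain ⟨h, hh⟩ := exists_schwartzMap_eq_FT f
  exact hh ▸ integral_norm_rpow_mul_norm_sq_le hs h

theorem norm_Sosc (n : ℕ) (a : ℝ) (f : EuclideanSpace ℝ (Fin n) → ℂ)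
    (x : EuclideanSpace ℝ (Fin n)) (t : ℝ) :
    ‖Sosc n a f x t‖ = ((2 * π) ^ n)⁻¹ * ‖osc a (FT n f) x t‖ := by
  rw [Sosc, osc, norm_mul, norm_inv, Complex.norm_real, Real.norm_of_nonneg (by positivity)]

theorem stmt7_general (a : ℝ) (ha : 1 < a) (n : ℕ) (hn : 0 < n) :
    ∃ C > 0, ∀ (T : Set ℝ) (f : SchwartzMap (EuclideanSpace ℝ (Fin n)) ℂ),
      (∀ x y, ‖x‖ = ‖y‖ → f x = f y) →
      (∫ x in Metric.ball (0 : EuclideanSpace ℝ (Fin n)) 1,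
          (⨆ t : T, ‖Sosc n a f x t‖) ^ 2) ^ (1 / 2 : ℝ)
        ≤ C * (∫ ξ, ‖ξ‖ ^ (1 / 2 : ℝ) * ‖FT n f ξ‖ ^ 2) ^ (1 / 2 : ℝ) := by
  have : NeZero n := ⟨hn.ne'⟩
  obtain ⟨C, hC, maximal⟩ := exists_integral_sq_iSup_osc_le (E := EuclideanSpace ℝ (Fin n)) ha
  set c : ℝ := ((2 * π) ^ n)⁻¹
  have hc : 0 < c := by positivity
  refine ⟨(c ^ 2 * C) ^ (1 / 2 : ℝ), by positivity, fun T f radial ↦ ?_⟩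
  obtain ⟨h, hh⟩ := exists_schwartzMap_eq_FT f
  have bound := maximal T h fun ξ η hξη ↦ by rw [hh, FT_eq_of_norm_eq radial hξη]
  rw [hh] at bound
  rw [← Real.mul_rpow (by positivity) (integral_nonneg fun ξ ↦ by positivity)]
  refine Real.rpow_le_rpow (integral_nonneg fun x ↦ sq_nonneg _) ?_ (by norm_num)
  simp only [norm_Sosc, ← Real.mul_iSup_of_nonneg hc.le, mul_pow c, c]
  rw [integral_const_mul, mul_assoc]
  exact mul_le_mul_of_nonneg_left bound (sq_nonneg c)

theorem stmt7 (a : ℝ) (ha : 1 < a) (n : ℕ) (hn : 2 ≤ n) :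
    ∃ C > 0, ∀ f : EuclideanSpace ℝ (Fin n) → ℂ,
      ContDiff ℝ (⊤ : ℕ∞) f → HasCompactSupport f → 0 ∉ tsupport f →
      (∀ x y : EuclideanSpace ℝ (Fin n), ‖x‖ = ‖y‖ → f x = f y) →
      (∫ x in Metric.ball (0 : EuclideanSpace ℝ (Fin n)) 1,
          (⨆ t : Set.Ioo (-1 : ℝ) 1, ‖Sosc n a f x t‖) ^ 2) ^ (1/2 : ℝ)
        ≤ C * (∫ ξ, (1 + ‖ξ‖ ^ 2) ^ (1/4 : ℝ) * ‖FT n f ξ‖ ^ 2) ^ (1/2 : ℝ) := by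
  obtain ⟨C, hC, maximal⟩ := stmt7_general a ha n (by omega)
  refine ⟨C, hC, fun f hf hc _ radial ↦ (maximal _ (hc.toSchwartzMap hf) radial).trans ?_⟩
  have sobolev := integral_norm_rpow_mul_norm_FT_sq_le (s := 1 / 4) (by norm_num)
    (hc.toSchwartzMap hf)
  rw [show (2 * (1 / 4) : ℝ) = 1 / 2 by norm_num] at sobolev
  exact mul_le_mul_of_nonneg_left (Real.rpow_le_rpow (by positivity) sobolev (by norm_num)) hC.le
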